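/- arXiv:2306.16889 — 4 statements merged into one kernel-verified Lean document; each statement's English description precedes it below -/
import Mathlib

section
/- For all real x, y with x/y ≥ 1, the series ∑_{k=1}^∞ (27xy)^k / (k² (x+y)^{2k} C(3k,k)) equals 6·arctan²(√3·y^{1/3} / (2x^{1/3} − y^{1/3})) − (1/2)·log²((x+y)/(x^{1/3}+y^{1/3})³). -/
open Real

lemma beta_nat (n : ℕ) : ∀ m : ℕ, ∫ u in (0:ℝ)..1, u^m * (1-u)^n
    = (m.factorial * n.factorial : ℝ) / ((m+n+1).factorial : ℝ) := by
  induction n with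
  | zero =>
    intro m
    simp [Nat.factorial_succ]
    have : (m.factorial : ℝ) ≠ 0 := by positivity
    field_simp
  | succ n ih =>
    intro m
    have h : ∫ u in (0:ℝ)..1, (((m:ℝ)+1) * (u^m * (1-u)^(n+1)) - ((n:ℝ)+1) * (u^(m+1) * (1-u)^n)) = 0 := by
      rw [intervalIntegral.integral_eq_sub_of_hasDerivAt (f := fun u : ℝ => u^(m+1) * (1-u)^(n+1))]
      · simp
      · intro u _
        have h1 := (hasDerivAt_pow (m+1) u).mul ((((hasDerivAt_id u).const_sub 1)).pow (n+1))
        refine h1.congr_deriv ?_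
        simp
        ring
      · apply Continuous.intervalIntegrable
        fun_prop
    rw [intervalIntegral.integral_sub (Continuous.intervalIntegrable (by fun_prop) _ _)
      (Continuous.intervalIntegrable (by fun_prop) _ _), intervalIntegral.integral_const_mul,
      intervalIntegral.integral_const_mul, ih] at h
    have e : m + 1 + n + 1 = m + (n+1) + 1 := by ring
    rw [e] at h
    have h2 : ((m:ℝ)+1) * (∫ u in (0:ℝ)..1, u^m * (1-u)^(n+1)) = ((m:ℝ)+1) * ((m.factorial * (n+1).factorial : ℝ) / ((m+(n+1)+1).factorial : ℝ)) := by
      rw [Nat.factorial_succ m] at h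
      rw [Nat.factorial_succ n]
      push_cast at h ⊢
      linear_combination h
    exact mul_left_cancel₀ (by positivity) h2

/-- coefficients -/
noncomputable def cc (k : ℕ) : ℝ := 1 / (((k:ℝ)+1) * (((3*(k+1)).choose (k+1) : ℕ) : ℝ))

lemma cc_nonneg (k : ℕ) : 0 ≤ cc k := by unfold cc; positivity

lemma cc_integral (k : ℕ) : ∫ u in (0:ℝ)..1, u^(2*k+2) * (1-u)^k = cc k := by
  rw [beta_nat, cc, Nat.choose_eq_factorial_div_factorial (by omega), Nat.cast_div
    (Nat.factorial_mul_factorial_dvd_factorial (by omega)) (by positivity)]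
  have e : 2*k+2+k+1 = 3*(k+1) := by ring
  have e2 : 3*(k+1) - (k+1) = 2*k+2 := by omega
  rw [e, e2, Nat.factorial_succ k]
  push_cast
  have := Nat.factorial_pos k
  have := Nat.factorial_pos (2*k+2)
  have := Nat.factorial_pos (3*(k+1))
  field_simp

lemma cube_bound (u : ℝ) (h0 : 0 ≤ u) (h1 : u ≤ 1) : u^2*(1-u) ≤ 4/27 := by
  nlinarith [mul_nonneg (sq_nonneg (3*u-2)) (by linarith : 0 ≤ 3*u+1)]

lemma cc_hasSum (z : ℝ) (hz : |z| < 27/4) :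
    HasSum (fun k => cc k * z^k) (∫ u in (0:ℝ)..1, u^2 / (1 - z*u^2*(1-u))) := by
  have hb : ∀ u ∈ Set.uIoc (0:ℝ) 1, |z*u^2*(1-u)| ≤ |z| * (4/27) := by
    intro u hu
    rw [Set.uIoc_of_le zero_le_one] at hu
    rw [mul_assoc, abs_mul]
    gcongr
    rw [abs_of_nonneg (mul_nonneg (sq_nonneg u) (by linarith [hu.2]))]
    exact cube_bound u hu.1.le hu.2
  have h := intervalIntegral.hasSum_integral_of_dominated_convergence (μ := MeasureTheory.volume)
    (a := 0) (b := 1)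
    (F := fun (k:ℕ) (u:ℝ) => u^2 * (z*u^2*(1-u))^k) (f := fun u => u^2 / (1 - z*u^2*(1-u)))
    (fun k _ => (|z| * (4/27))^k) ?_ ?_ ?_ ?_ ?_
  · have e : (fun k => cc k * z^k) = fun k : ℕ => ∫ u in (0:ℝ)..1, u^2 * (z*u^2*(1-u))^k := ?_
    · rw [e]; exact h
    ext k
    rw [← cc_integral, mul_comm, ← intervalIntegral.integral_const_mul]
    congr 1; ext u
    rw [mul_pow, mul_pow]
    ring
  · intro k
    apply Continuous.aestronglyMeasurable
    fun_prop
  · intro k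
    refine Filter.Eventually.of_forall fun u hu => ?_
    have := hb u hu
    rw [Set.uIoc_of_le zero_le_one] at hu
    rw [norm_mul, norm_pow, norm_pow, Real.norm_eq_abs, Real.norm_eq_abs]
    have h1 : |u|^2 ≤ 1 := by
      rw [sq_abs]; nlinarith [hu.1, hu.2]
    calc |u|^2 * |z*u^2*(1-u)|^k ≤ 1 * (|z| * (4/27))^k := by gcongr
      _ = _ := one_mul _
  · refine Filter.Eventually.of_forall fun u hu => ?_
    exact summable_geometric_of_lt_one (by positivity) (by linarith)
  · exact intervalIntegrable_const
  · refine Filter.Eventually.of_forall fun u hu => ?_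
    rw [div_eq_mul_inv]
    apply HasSum.mul_left
    apply hasSum_geometric_of_abs_lt_one
    linarith [hb u hu]

/-- the series -/
noncomputable def SS (z : ℝ) : ℝ := ∑' k : ℕ, cc k / (k+1) * z^(k+1)

lemma SS_summable (z : ℝ) (hz : |z| < 27/4) : Summable (fun k : ℕ => cc k / (k+1) * z^(k+1)) := by
  have h := ((cc_hasSum |z| (by rwa [abs_abs])).summable).mul_right |z|
  refine Summable.of_norm_bounded h fun k => ?_
  rw [norm_mul, norm_pow, Real.norm_eq_abs, Real.norm_eq_abs, abs_of_nonneg (div_nonneg (cc_nonneg k) (by positivity)), pow_succ, mul_assoc]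
  gcongr
  exact div_le_self (cc_nonneg k) (by linarith [(Nat.cast_nonneg k : (0:ℝ) ≤ k)])

lemma SS_deriv (z : ℝ) (hz : |z| < 27/4) :
    HasDerivAt SS (∫ u in (0:ℝ)..1, u^2 / (1 - z*u^2*(1-u))) z := by
  obtain ⟨r, hr1, hr2⟩ := exists_between hz
  have hr0 : 0 < r := lt_of_le_of_lt (abs_nonneg z) hr1
  have hs := (cc_hasSum r (by rwa [abs_of_pos hr0])).summable
  rw [← (cc_hasSum z hz).tsum_eq]
  unfold SS
  refine hasDerivAt_tsum_of_isPreconnected hs (t := Set.Ioo (-r) r) isOpen_Ioo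
    (convex_Ioo _ _).isPreconnected
    (g := fun (k:ℕ) z => cc k / (k+1) * z^(k+1)) (g' := fun k z => cc k * z^k) ?_ ?_
    (y₀ := 0) ⟨by linarith, hr0⟩ ?_ (abs_lt.1 hr1)
  · intro k y _
    refine ((hasDerivAt_pow (k+1) y).const_mul (cc k / (k+1))).congr_deriv ?_
    have : (k:ℝ)+1 ≠ 0 := by positivity
    push_cast
    field_simp
  · intro k y hy
    rw [norm_mul, norm_pow, Real.norm_eq_abs, Real.norm_eq_abs, abs_of_nonneg (cc_nonneg k)]
    have := (abs_lt.2 hy).le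
    have := cc_nonneg k
    gcongr
  · exact SS_summable 0 (by norm_num)

lemma arc_deriv (N D : ℝ → ℝ) (N' D' t : ℝ) (hN : HasDerivAt N N' t) (hD : HasDerivAt D D' t)
    (h0 : D t ≠ 0) : HasDerivAt (fun s => arctan (N s / (√3 * D s)))
      (√3 * (N' * D t - N t * D') / (3 * D t^2 + N t^2)) t := by
  have h3 : √3 ^ 2 = 3 := Real.sq_sqrt (by norm_num)
  have hp : √3 ≠ 0 := by positivity
  refine ((hN.div (hD.const_mul √3) (mul_ne_zero hp h0)).arctan).congr_deriv ?_
  have hd : 0 < 3 * D t^2 + N t^2 := by positivity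
  have hd2 : 0 < 3 * D t^2 := by positivity
  simp only [Pi.div_apply]
  rw [div_pow, mul_pow, h3]
  have e : 1 + N t^2 / (3 * D t^2) = (3 * D t^2 + N t^2) / (3 * D t^2) := by field_simp
  rw [e]
  field_simp

lemma const_of_deriv (f : ℝ → ℝ) (t : ℝ) (ht : 0 ≤ t)
    (hc : ContinuousOn f (Set.Icc 0 t)) (hd : ∀ s ∈ Set.Ioo 0 t, HasDerivAt f 0 s) : f t = f 0 := by
  rcases ht.eq_or_lt with h | h
  · rw [← h]
  · obtain ⟨c, _, hc⟩ := exists_hasDerivAt_eq_slope f (fun _ => 0) h hc hd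
    field_simp at hc
    linarith

noncomputable def AA (t : ℝ) : ℝ := arctan (3 * t / (√3 * (2 - t)))

lemma AA_deriv (t : ℝ) (ht : t < 2) : HasDerivAt AA ((√3/2) / (1 - t + t^2)) t := by
  unfold AA
  refine (arc_deriv (fun t => 3 * t) (fun t => 2 - t) _ _ t ((hasDerivAt_id t).const_mul 3)
    ((hasDerivAt_id t).const_sub 2) (by linarith)).congr_deriv ?_
  have hw : 0 < 1 - t + t^2 := by nlinarith [sq_nonneg (t - 1/2)]
  have e : 3 * (2-t)^2 + (3*t)^2 = 12 * (1 - t + t^2) := by ring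
  rw [e]
  field_simp
  ring

lemma angle (t : ℝ) (h0 : 0 ≤ t) (h1 : t < 1) :
    arctan ((6*t - (1+t)^2) / (√3 * (1-t^2))) - arctan ((-(1+t)^2) / (√3 * (1-t^2))) = 3 * AA t := by
  have key : ∀ s ∈ Set.Icc 0 t, HasDerivAt (fun t => arctan ((6*t - (1+t)^2) / (√3 * (1-t^2))) - arctan ((-(1+t)^2) / (√3 * (1-t^2))) - 3 * AA t) 0 s := by
    intro s hs
    have hs1 : s < 1 := by linarith [hs.2]
    have hs0 := hs.1
    have hD : HasDerivAt (fun t : ℝ => 1 - t^2) (-(2*s)) s := by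
      simpa using (hasDerivAt_pow 2 s).const_sub 1
    have hP : HasDerivAt (fun t : ℝ => (1+t)^2) (2*(1+s)) s := by
      simpa using (((hasDerivAt_id s).const_add 1).fun_pow 2)
    have h6 : HasDerivAt (fun t : ℝ => 6*t) 6 s := by
      simpa using (hasDerivAt_id s).const_mul 6
    have hne : 1 - s^2 ≠ 0 := by nlinarith
    refine (((arc_deriv _ _ _ _ s (h6.sub hP) hD hne).sub (arc_deriv _ _ _ _ s hP.neg hD hne)).sub
      ((AA_deriv s (by linarith)).const_mul 3)).congr_deriv ?_
    have hw : 0 < 1 - s + s^2 := by nlinarith [sq_nonneg (s - 1/2)]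
    have hp : 0 < 1 + s := by linarith
    simp only [Pi.sub_apply, Pi.neg_apply]
    have e1 : 3 * (1-s^2)^2 + (6*s-(1+s)^2)^2 = 4 * (1-s+s^2)^2 := by ring
    have e2 : 3 * (1-s^2)^2 + (-(1+s)^2)^2 = 4 * ((1-s+s^2) * (1+s)^2) := by ring
    rw [e1, e2]
    field_simp
    ring
  have := const_of_deriv _ t h0 (fun s hs => (key s hs).continuousAt.continuousWithinAt)
    (fun s hs => key s (Set.Ioo_subset_Icc_self hs))
  simp [AA] at this
  simp [AA]
  linarith

lemma integral_eval (t : ℝ) (h0 : 0 < t) (h1 : t < 1) :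
    27*t^3/(1+t^3)^2 * (∫ u in (0:ℝ)..1, u^2 / (1 - 27*t^3/(1+t^3)^2*u^2*(1-u))) =
    t * (2*√3*AA t*(1+t) + log ((1+t^3)/(1+t)^3) * (1-t)) / (1-t^3) := by
  have hw : 0 < 1 - t + t^2 := by nlinarith [sq_nonneg (t - 1/2)]
  have hp : 0 < 1 + t := by linarith
  have hm : 0 < 1 - t := by linarith
  have hs : 0 < 1 + t + t^2 := by positivity
  have hc : 0 < 1 + t^3 := by positivity
  have hc2 : 0 < 1 - t^2 := by nlinarith
  have h3 : √3 ^ 2 = 3 := Real.sq_sqrt (by norm_num)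
  have hR : ∀ u : ℝ, 0 < (1+t)^2*(1-t+t^2) - 3*t*(1+t)^2*u + 9*t^2*u^2 := by
    intro u
    have : (1+t)^2*(1-t+t^2) - 3*t*(1+t)^2*u + 9*t^2*u^2 = (3*t*u - (1+t)^2/2)^2 + 3/4*((1+t)*(1-t))^2 := by ring
    rw [this]; positivity
  rw [← intervalIntegral.integral_const_mul]
  rw [intervalIntegral.integral_eq_sub_of_hasDerivAt (f := fun u : ℝ =>
    (1-t+t^2)/(3*(1+t+t^2)) * log (1-t+t^2+3*t*u)
    + (1+t)^2/(3*(1+t+t^2)) * log ((1+t)^2*(1-t+t^2) - 3*t*(1+t)^2*u + 9*t^2*u^2)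
    + 2*√3*t*(1+t)/(3*((1-t)*(1+t+t^2))) * arctan ((6*t*u - (1+t)^2) / (√3 * (1-t^2))))]
  · have ha := angle t h0.le h1
    have e1 : 1-t+t^2+3*t*1 = (1+t)^2 := by ring
    have e2 : (1+t)^2*(1-t+t^2) - 3*t*(1+t)^2*1 + 9*t^2*1^2 = (1-t+t^2)^2 := by ring
    have e3 : (1+t)^2*(1-t+t^2) - 3*t*(1+t)^2*0 + 9*t^2*0^2 = (1+t)^2*(1-t+t^2) := by ring
    have e4 : (1+t^3)/(1+t)^3 = (1-t+t^2)/(1+t)^2 := by field_simp; ring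
    have e5 : 1 - t^3 = (1-t)*(1+t+t^2) := by ring
    rw [e1, e2, e3, e4, e5, log_div hw.ne' (by positivity), log_mul (by positivity) hw.ne', log_pow, log_pow]
    simp only [mul_one, mul_zero, add_zero, zero_sub]
    rw [sub_eq_iff_eq_add] at ha
    rw [ha]
    push_cast
    field_simp
    ring
  · intro u hu
    rw [Set.uIcc_of_le zero_le_one] at hu
    have hu0 := hu.1
    have hRu := hR u
    have hl : 0 < 1-t+t^2+3*t*u := by positivity
    have d1 : HasDerivAt (fun u : ℝ => 1-t+t^2+3*t*u) (3*t) u := by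
      simpa using ((hasDerivAt_id u).const_mul (3*t)).const_add (1-t+t^2)
    have d2 : HasDerivAt (fun u : ℝ => (1+t)^2*(1-t+t^2) - 3*t*(1+t)^2*u + 9*t^2*u^2) (-(3*t*(1+t)^2) + 9*t^2*(2*u)) u := by
      have a := ((hasDerivAt_id u).const_mul (3*t*(1+t)^2)).const_sub ((1+t)^2*(1-t+t^2))
      have b := (hasDerivAt_pow 2 u).const_mul (9*t^2)
      simpa using a.fun_add b
    have d3 : HasDerivAt (fun u : ℝ => 6*t*u - (1+t)^2) (6*t) u := by
      simpa using ((hasDerivAt_id u).const_mul (6*t)).sub_const ((1+t)^2)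
    have d4 := arc_deriv _ (fun _ => 1-t^2) _ _ u d3 (hasDerivAt_const u (1-t^2)) hc2.ne'
    refine ((((d1.log hl.ne').const_mul ((1-t+t^2)/(3*(1+t+t^2)))).add
      ((d2.log hRu.ne').const_mul ((1+t)^2/(3*(1+t+t^2))))).add
      (d4.const_mul (2*√3*t*(1+t)/(3*((1-t)*(1+t+t^2)))))).congr_deriv ?_
    have e1 : 3*(1-t^2)^2 + (6*t*u - (1+t)^2)^2 = 4 * ((1+t)^2*(1-t+t^2) - 3*t*(1+t)^2*u + 9*t^2*u^2) := by ring
    have e2 : 1 - 27*t^3/(1+t^3)^2*u^2*(1-u) = (1-t+t^2+3*t*u) * ((1+t)^2*(1-t+t^2) - 3*t*(1+t)^2*u + 9*t^2*u^2) / (1+t^3)^2 := by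
      field_simp; ring
    have e3 : 2*√3*t*(1+t)/(3*((1-t)*(1+t+t^2))) * (√3 * (6*t*(1-t^2) - (6*t*u-(1+t)^2)*0) / (4 * ((1+t)^2*(1-t+t^2) - 3*t*(1+t)^2*u + 9*t^2*u^2)))
       = 3*t^2*(1+t)^2/((1+t+t^2)*((1+t)^2*(1-t+t^2) - 3*t*(1+t)^2*u + 9*t^2*u^2)) := by
      have : √3 * √3 = 3 := by rw [← sq, h3]
      have e : 1 - t^2 = (1-t)*(1+t) := by ring
      generalize ((1+t)^2*(1-t+t^2) - 3*t*(1+t)^2*u + 9*t^2*u^2) = R at *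
      rw [e]
      field_simp
      rw [h3]; ring
    rw [e1, e2, e3]
    generalize hRR : ((1+t)^2*(1-t+t^2) - 3*t*(1+t)^2*u + 9*t^2*u^2) = R at *
    generalize hll : 1-t+t^2+3*t*u = l at *
    field_simp
    subst hRR hll
    ring
  · apply ContinuousOn.intervalIntegrable
    intro u hu
    rw [Set.uIcc_of_le zero_le_one] at hu
    have hu0 := hu.1
    have hRu := hR u
    have e2 : 1 - 27*t^3/(1+t^3)^2*u^2*(1-u) = (1-t+t^2+3*t*u) * ((1+t)^2*(1-t+t^2) - 3*t*(1+t)^2*u + 9*t^2*u^2) / (1+t^3)^2 := by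
      field_simp; ring
    have : 1 - 27*t^3/(1+t^3)^2*u^2*(1-u) ≠ 0 := by
      rw [e2]; positivity
    apply ContinuousAt.continuousWithinAt
    fun_prop (disch := assumption)

noncomputable def zz (t : ℝ) : ℝ := 27*t^3/(1+t^3)^2

noncomputable def FF (t : ℝ) : ℝ := 6 * (AA t)^2 - (1/2) * (log ((1+t^3)/(1+t)^3))^2

lemma zz_lt (t : ℝ) (h0 : 0 ≤ t) (h1 : t < 1) : |zz t| < 27/4 := by
  have h3 : t^3 < 1 := pow_lt_one₀ h0 h1 (by norm_num)
  have h30 : 0 ≤ t^3 := by positivity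
  unfold zz
  rw [abs_of_nonneg (by positivity), div_lt_div_iff₀ (by positivity) (by norm_num)]
  nlinarith [mul_pos (sub_pos.2 h3) (sub_pos.2 h3)]

lemma zz_deriv (t : ℝ) (h0 : 0 ≤ t) : HasDerivAt zz (81*t^2*(1-t^3)/(1+t^3)^3) t := by
  have hc : 0 < 1 + t^3 := by positivity
  have a : HasDerivAt (fun t : ℝ => 27*t^3) (27*(3*t^2)) t := by
    simpa using (hasDerivAt_pow 3 t).const_mul 27
  have b : HasDerivAt (fun t : ℝ => (1+t^3)^2) (2*(1+t^3)*(3*t^2)) t := by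
    simpa using ((hasDerivAt_pow 3 t).const_add 1).fun_pow 2
  refine (a.fun_div b (by positivity)).congr_deriv ?_
  field_simp
  ring

lemma LL_deriv (t : ℝ) (h0 : 0 ≤ t) :
    HasDerivAt (fun t : ℝ => log ((1+t^3)/(1+t)^3)) (3*(t-1)/(1+t^3)) t := by
  have hc : 0 < 1 + t^3 := by positivity
  have hp : 0 < 1 + t := by positivity
  have a : HasDerivAt (fun t : ℝ => 1+t^3) (3*t^2) t := by
    simpa using (hasDerivAt_pow 3 t).const_add 1
  have b : HasDerivAt (fun t : ℝ => (1+t)^3) (3*(1+t)^2) t := by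
    simpa using ((hasDerivAt_id t).const_add 1).fun_pow 3
  refine ((a.fun_div b (by positivity)).log (by positivity)).congr_deriv ?_
  field_simp
  ring

lemma FF_deriv (t : ℝ) (h0 : 0 ≤ t) (h2 : t < 2) :
    HasDerivAt FF (6*√3*AA t/(1-t+t^2) + log ((1+t^3)/(1+t)^3) * (3*(1-t)/(1+t^3))) t := by
  have hc : 0 < 1 + t^3 := by positivity
  have hw : 0 < 1 - t + t^2 := by nlinarith [sq_nonneg (t - 1/2)]
  refine ((((AA_deriv t h2).fun_pow 2).const_mul 6).fun_sub
    (((LL_deriv t h0).fun_pow 2).const_mul (1/2))).congr_deriv ?_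
  simp only [Nat.cast_ofNat, Nat.add_one_sub_one, pow_one]
  field_simp
  ring

lemma SS_eq (t : ℝ) (h0 : 0 ≤ t) (h1 : t < 1) : SS (zz t) = FF t := by
  have hd : ∀ s ∈ Set.Icc 0 t, HasDerivAt (fun s => SS (zz s) - FF s)
      ((∫ u in (0:ℝ)..1, u^2 / (1 - zz s*u^2*(1-u))) * (81*s^2*(1-s^3)/(1+s^3)^3) -
       (6*√3*AA s/(1-s+s^2) + log ((1+s^3)/(1+s)^3) * (3*(1-s)/(1+s^3)))) s := by
    intro s hs
    exact ((SS_deriv (zz s) (zz_lt s hs.1 (by linarith [hs.2]))).comp s (zz_deriv s hs.1)).fun_sub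
      (FF_deriv s hs.1 (by linarith [hs.2]))
  have := const_of_deriv (fun s => SS (zz s) - FF s) t h0
    (fun s hs => (hd s hs).continuousAt.continuousWithinAt) (by
      intro s hs
      have hs0 := hs.1
      have hs1 : s < 1 := by linarith [hs.2]
      refine (hd s (Set.Ioo_subset_Icc_self hs)).congr_deriv ?_
      have hi := integral_eval s hs0 hs1
      have hw : 0 < 1 - s + s^2 := by nlinarith [sq_nonneg (s - 1/2)]
      have hc : 0 < 1 + s^3 := by positivity
      have hm : 0 < 1 - s^3 := by
        have := pow_lt_one₀ hs0.le hs1 (n := 3) (by norm_num)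
        linarith
      unfold zz
      generalize (∫ u in (0:ℝ)..1, u^2 / (1 - 27*s^3/(1+s^3)^2*u^2*(1-u))) = I at *
      have e : I * (81*s^2*(1-s^3)/(1+s^3)^3) = (27*s^3/(1+s^3)^2 * I) * (3*(1-s^3)/(s*(1+s^3))) := by
        field_simp
        ring
      rw [e, hi]
      have e2 : 1 + s^3 = (1+s)*(1-s+s^2) := by ring
      generalize log ((1+s^3)/(1+s)^3) = L at *
      have hp : 0 < 1 + s := by linarith
      rw [e2]
      field_simp
      ring)
  have z0 : SS (zz 0) - FF 0 = 0 := by simp [SS, zz, FF, AA]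
  simp only [z0] at this
  linarith

lemma SS_one : ∑' k : ℕ, cc k / (k+1) * (zz 1)^(k+1) = FF 1 := by
  have hz1 : ContinuousAt zz 1 := (zz_deriv 1 (by norm_num)).continuousAt
  have hF1 : ContinuousAt FF 1 := (FF_deriv 1 (by norm_num) (by norm_num)).continuousAt
  have hz0 : ∀ t : ℝ, 0 ≤ t → 0 ≤ zz t := fun t ht => by unfold zz; positivity
  have hev : ∀ᶠ t : ℝ in nhdsWithin 1 (Set.Iio 1), t ∈ Set.Ioo (0:ℝ) 1 :=
    Ioo_mem_nhdsLT (by norm_num)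
  have hFl := hF1.tendsto.mono_left (nhdsWithin_le_nhds (s := Set.Iio 1))
  have hnn : ∀ t : ℝ, 0 ≤ t → ∀ k : ℕ, 0 ≤ cc k / (k+1) * (zz t)^(k+1) := fun t ht k =>
    mul_nonneg (div_nonneg (cc_nonneg k) (by positivity)) (pow_nonneg (hz0 t ht) _)
  have hpart : ∀ n : ℕ, ∑ k ∈ Finset.range n, cc k / (k+1) * (zz 1)^(k+1) ≤ FF 1 := by
    intro n
    have hc : ContinuousAt (fun t => ∑ k ∈ Finset.range n, cc k / (k+1) * (zz t)^(k+1)) 1 := by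
      fun_prop
    refine le_of_tendsto_of_tendsto (hc.tendsto.mono_left (nhdsWithin_le_nhds (s := Set.Iio 1))) hFl ?_
    filter_upwards [hev] with t ht
    rw [← SS_eq t ht.1.le ht.2]
    exact (SS_summable _ (zz_lt t ht.1.le ht.2)).sum_le_tsum _ (fun k _ => hnn t ht.1.le k)
  have hsum := summable_of_sum_range_le (hnn 1 zero_le_one) hpart
  apply le_antisymm
  · exact Real.tsum_le_of_sum_range_le (hnn 1 zero_le_one) hpart
  · refine le_of_tendsto hFl ?_
    filter_upwards [hev] with t ht
    rw [← SS_eq t ht.1.le ht.2]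
    refine (SS_summable _ (zz_lt t ht.1.le ht.2)).tsum_le_tsum (fun k => ?_) hsum
    have h1 : zz t ≤ zz 1 := by
      have := (abs_lt.1 (zz_lt t ht.1.le ht.2)).2.le
      refine this.trans (le_of_eq ?_)
      norm_num [zz]
    have h2 := hz0 t ht.1.le
    have h3 := cc_nonneg k
    gcongr

theorem stmt_0 (x y : ℝ) (hy : 0 < y) (hxy : 1 ≤ x / y) :
    ∑' k : ℕ, (27*x*y)^(k+1) /
      (((k:ℝ)+1)^2 * (x+y)^(2*(k+1)) * (((3*(k+1)).choose (k+1) : ℕ) : ℝ)) =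
    6 * (Real.arctan (Real.sqrt 3 * y ^ ((1:ℝ)/3) / (2 * x ^ ((1:ℝ)/3) - y ^ ((1:ℝ)/3))))^2
      - (1/2) * (Real.log ((x+y) / (x ^ ((1:ℝ)/3) + y ^ ((1:ℝ)/3))^3))^2 := by
  have hyx : y ≤ x := by rwa [le_div_iff₀ hy, one_mul] at hxy
  have hx : 0 < x := by linarith
  have hab : y ^ ((1:ℝ)/3) ≤ x ^ ((1:ℝ)/3) := Real.rpow_le_rpow hy.le hyx (by norm_num)
  have ha3 : (x ^ ((1:ℝ)/3))^3 = x := by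
    rw [← Real.rpow_natCast, ← Real.rpow_mul hx.le]; norm_num
  have hb3 : (y ^ ((1:ℝ)/3))^3 = y := by
    rw [← Real.rpow_natCast, ← Real.rpow_mul hy.le]; norm_num
  have ha : 0 < x ^ ((1:ℝ)/3) := Real.rpow_pos_of_pos hx _
  have hb : 0 < y ^ ((1:ℝ)/3) := Real.rpow_pos_of_pos hy _
  generalize x ^ ((1:ℝ)/3) = a at *
  generalize y ^ ((1:ℝ)/3) = b at *
  subst ha3 hb3
  have hz : zz (b/a) = 27*a^3*b^3/(a^3+b^3)^2 := by
    unfold zz; field_simp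
  have hF : FF (b/a) = 6 * (Real.arctan (Real.sqrt 3 * b / (2 * a - b)))^2
      - (1/2) * (Real.log ((a^3+b^3) / (a + b)^3))^2 := by
    have hm : 0 < 2*a - b := by linarith
    have h3 : √3 ^ 2 = 3 := Real.sq_sqrt (by norm_num)
    have e1 : 3 * (b/a) / (√3 * (2 - b/a)) = √3 * b / (2*a-b) := by
      have : 2 - b/a = (2*a-b)/a := by field_simp
      rw [this]
      field_simp
      rw [h3]
    have e2 : (1+(b/a)^3)/(1+b/a)^3 = (a^3+b^3) / (a + b)^3 := by field_simp
    rw [FF, AA, e1, e2]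
  rw [← hF]
  have hS : ∑' k : ℕ, cc k / (k+1) * (zz (b/a))^(k+1) = FF (b/a) := by
    rcases hab.eq_or_lt with h | h
    · rw [h, div_self ha.ne']; exact SS_one
    · exact SS_eq _ (by positivity) (by rwa [div_lt_one ha])
  rw [← hS]
  congr 1; ext k
  rw [hz, div_pow, cc, ← pow_mul]
  have hch : (0:ℝ) < (((3*(k+1)).choose (k+1) : ℕ) : ℝ) := by
    exact_mod_cast Nat.choose_pos (by omega)
  field_simp
end

section
/- ∑_{k=1}^∞ (8/3)^k / (k² · C(3k,k)) = π²/6 − (1/2)·(log 3)². -/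
open Real

noncomputable def hker : ℝ → ℝ := dslope (fun t : ℝ => -Real.log (1 - t)) 0

noncomputable def dilog (x : ℝ) : ℝ := ∫ t in (0:ℝ)..x, hker t

lemma neglog_deriv {x : ℝ} (hx : x < 1) :
    HasDerivAt (fun t : ℝ => -Real.log (1 - t)) (1 / (1 - x)) x := by
  have h1 : HasDerivAt (fun t : ℝ => 1 - t) (-1) x := by
    simpa using (hasDerivAt_id x).const_sub 1
  have h2 := (h1.log (by linarith)).neg
  convert! h2 using 1
  ring

lemma hker_zero : hker 0 = 1 := by
  unfold hker
  rw [dslope_same, (neglog_deriv (by norm_num : (0:ℝ) < 1)).deriv]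
  norm_num

lemma hker_ne {x : ℝ} (hx : x ≠ 0) : hker x = -Real.log (1 - x) / x := by
  unfold hker
  rw [dslope_of_ne _ hx, slope_def_field]
  simp

lemma hker_cont : ContinuousOn hker (Set.Iio 1) := by
  unfold hker
  rw [continuousOn_dslope (Iio_mem_nhds one_pos)]
  exact ⟨fun x hx => (neglog_deriv hx).continuousAt.continuousWithinAt,
    (neglog_deriv one_pos).differentiableAt⟩

lemma dilog_deriv {x : ℝ} (hx : x < 1) : HasDerivAt dilog (hker x) x := by
  unfold dilog
  apply intervalIntegral.integral_hasDerivAt_right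
  · apply ContinuousOn.intervalIntegrable
    apply hker_cont.mono
    intro y hy
    rw [Set.mem_uIcc] at hy
    rw [Set.mem_Iio]
    rcases hy with h | h <;> linarith [h.1, h.2]
  · exact hker_cont.stronglyMeasurableAtFilter isOpen_Iio x hx
  · exact hker_cont.continuousAt (Iio_mem_nhds hx)

lemma dilog_zero : dilog 0 = 0 := by simp [dilog]

lemma const_of_deriv_s2 {f : ℝ → ℝ} {s : Set ℝ} (hs : IsOpen s) (hc : Convex ℝ s)
    (hf : ∀ x ∈ s, HasDerivAt f 0 x) {x y : ℝ} (hx : x ∈ s) (hy : y ∈ s) : f x = f y :=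
  hs.is_const_of_deriv_eq_zero hc.isPreconnected
    (fun z hz => (hf z hz).differentiableAt.differentiableWithinAt)
    (fun z hz => (hf z hz).deriv) hx hy

lemma landen {x : ℝ} (hx : x < 1) :
    dilog x + dilog (x / (x - 1)) = -(1/2) * Real.log (1 - x) ^ 2 := by
  have key : ∀ y ∈ Set.Iio (1:ℝ), HasDerivAt
      (fun y => dilog y + dilog (y / (y - 1)) + (1/2) * (-Real.log (1 - y)) ^ 2) 0 y := by
    intro y hy
    have hy1 : y < 1 := hy
    have hne : y - 1 ≠ 0 := by linarith
    have hne' : 1 - y ≠ 0 := by linarith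
    have e1 : 1 - y / (y - 1) = (1 - y)⁻¹ := by field_simp; ring
    have hlt : y / (y - 1) < 1 := by
      have : 0 < (1 - y)⁻¹ := inv_pos.mpr (by linarith)
      linarith
    have h1 : HasDerivAt (fun y : ℝ => y / (y - 1)) ((1 * (y - 1) - y * 1) / (y - 1) ^ 2) y :=
      (hasDerivAt_id y).div ((hasDerivAt_id y).sub_const 1) hne
    have h2 : HasDerivAt (fun y : ℝ => dilog (y / (y - 1))) _ y :=
      HasDerivAt.comp y (dilog_deriv hlt) h1
    have h3 := ((dilog_deriv hy1).add h2).add (((neglog_deriv hy1).pow 2).const_mul (1/2))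
    convert! h3 using 1
    by_cases h0 : y = 0
    · subst h0
      simp [hker_zero]
    · rw [hker_ne h0, hker_ne (div_ne_zero h0 hne), e1, Real.log_inv]
      push_cast
      field_simp
      ring
  have := const_of_deriv_s2 isOpen_Iio (convex_Iio 1) key (Set.mem_Iio.mpr hx)
    (Set.mem_Iio.mpr one_pos)
  simp [dilog_zero] at this
  linarith

lemma dup {x : ℝ} (hx0 : -1 < x) (hx : x < 1) :
    dilog (x ^ 2) = 2 * dilog x + 2 * dilog (-x) := by
  have key : ∀ y ∈ Set.Ioo (-1:ℝ) 1, HasDerivAt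
      (fun y => dilog (y ^ 2) - (2 * dilog y + 2 * dilog (-y))) 0 y := by
    intro y hy
    have hy1 : y < 1 := hy.2
    have hy0 : -1 < y := hy.1
    have h1 : HasDerivAt (fun y : ℝ => dilog (y ^ 2)) _ y :=
      HasDerivAt.comp (h := fun y : ℝ => y ^ 2) y (dilog_deriv (by nlinarith : y ^ 2 < 1))
        (hasDerivAt_pow 2 y)
    have h2 : HasDerivAt (fun y : ℝ => dilog (-y)) _ y :=
      HasDerivAt.comp y (dilog_deriv (by linarith : -y < 1)) ((hasDerivAt_id y).neg)
    have h3 := h1.sub (((dilog_deriv hy1).const_mul 2).add (h2.const_mul 2))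
    convert! h3 using 1
    by_cases h0 : y = 0
    · subst h0
      simp [hker_zero]
    · rw [hker_ne h0, hker_ne (pow_ne_zero 2 h0), hker_ne (neg_ne_zero.mpr h0)]
      have e : (1 - y ^ 2) = (1 - y) * (1 - -y) := by ring
      rw [e, Real.log_mul (by linarith) (by linarith)]
      simp
      field_simp
      ring
  have := const_of_deriv_s2 isOpen_Ioo (convex_Ioo _ _) key (Set.mem_Ioo.mpr ⟨hx0, hx⟩)
    (Set.mem_Ioo.mpr ⟨by norm_num, one_pos⟩)
  simp [dilog_zero] at this
  linarith

lemma dilog_series {x : ℝ} (hx0 : 0 ≤ x) (hx : x < 1) :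
    dilog x = ∑' n : ℕ, x ^ (n + 1) / ((n:ℝ) + 1) ^ 2 := by
  set r : ℝ := (1 + x) / 2 with hr
  have hr1 : r < 1 := by rw [hr]; linarith
  have hr0 : 0 < r := by rw [hr]; linarith
  have hxr : x < r := by rw [hr]; linarith
  have key : ∀ y ∈ Set.Ioo (-r) r, HasDerivAt
      (fun y => dilog y - ∑' n : ℕ, y ^ (n + 1) / ((n:ℝ) + 1) ^ 2) 0 y := by
    intro y hy
    have hya : |y| < r := abs_lt.mpr hy
    have h1 : HasDerivAt (fun y : ℝ => ∑' n : ℕ, y ^ (n + 1) / ((n:ℝ) + 1) ^ 2)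
        (∑' n : ℕ, y ^ n / ((n:ℝ) + 1)) y := by
      refine hasDerivAt_tsum_of_isPreconnected (u := fun n : ℕ => r ^ n) (t := Set.Ioo (-r) r)
        (g := fun (n : ℕ) (y : ℝ) => y ^ (n + 1) / ((n:ℝ) + 1) ^ 2)
        (g' := fun (n : ℕ) (y : ℝ) => y ^ n / ((n:ℝ) + 1))
        (y₀ := 0) (summable_geometric_of_lt_one hr0.le hr1) isOpen_Ioo
        (convex_Ioo _ _).isPreconnected ?_ ?_ ?_ ?_ hy
      · intro n z hz
        have := (hasDerivAt_pow (n + 1) z).div_const (((n:ℝ) + 1) ^ 2)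
        convert! this using 1
        have : (n:ℝ) + 1 ≠ 0 := by positivity
        push_cast
        field_simp
      · intro n z hz
        have hz' : |z| ≤ r := (abs_lt.mpr hz).le
        rw [norm_div, norm_pow, Real.norm_eq_abs, Real.norm_eq_abs,
          abs_of_pos (by positivity : (0:ℝ) < (n:ℝ) + 1)]
        calc |z| ^ n / ((n:ℝ) + 1) ≤ |z| ^ n :=
              div_le_self (by positivity) (by linarith [(Nat.cast_nonneg n : (0:ℝ) ≤ n)])
          _ ≤ r ^ n := by gcongr
      · exact ⟨by linarith, hr0⟩
      · simp
    have h2 : ∑' n : ℕ, y ^ n / ((n:ℝ) + 1) = hker y := by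
      by_cases h0 : y = 0
      · subst h0
        rw [hker_zero, tsum_eq_single 0]
        · simp
        · intro n hn
          simp [hn]
      · rw [hker_ne h0]
        have := (Real.hasSum_pow_div_log_of_abs_lt_one (hya.trans hr1)).div_const y
        rw [← this.tsum_eq]
        congr 1
        ext n
        field_simp
        try ring
    rw [h2] at h1
    have h3 := (dilog_deriv (lt_of_lt_of_le hy.2 hr1.le)).sub h1
    convert! h3 using 1
    ring
  have := const_of_deriv_s2 isOpen_Ioo (convex_Ioo _ _) key (x := x) (y := 0)
    ⟨by linarith, hxr⟩ ⟨by linarith, hr0⟩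
  simp [dilog_zero] at this
  linarith

lemma tsum_zeta : ∑' n : ℕ, (1:ℝ) / ((n:ℝ) + 1) ^ 2 = π ^ 2 / 6 := by
  have h := hasSum_zeta_two
  have := (hasSum_nat_add_iff' 1).mpr h
  simp at this
  rw [← this.tsum_eq]
  simp

lemma dilog_lim : Filter.Tendsto dilog (nhdsWithin 1 (Set.Iio 1)) (nhds (π ^ 2 / 6)) := by
  have hc : ContinuousOn (fun x : ℝ => ∑' n : ℕ, x ^ (n + 1) / ((n:ℝ) + 1) ^ 2)
      (Set.Icc 0 1) := by
    refine continuousOn_tsum (u := fun n : ℕ => (1:ℝ) / ((n:ℝ) + 1) ^ 2) ?_ ?_ ?_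
    · intro n
      fun_prop
    · have := (summable_nat_add_iff 1).mpr hasSum_zeta_two.summable
      simpa using this
    · intro n x hx
      rw [Real.norm_of_nonneg (div_nonneg (pow_nonneg hx.1 _) (by positivity))]
      gcongr
      exact pow_le_one₀ hx.1 hx.2
  have h1 := (hc 1 ⟨by norm_num, le_rfl⟩).tendsto
  simp only [one_pow, tsum_zeta] at h1
  have h2 := h1.mono_left (nhdsWithin_mono 1 (Set.Ico_subset_Icc_self))
  rw [nhdsWithin_Ico_eq_nhdsLT one_pos] at h2
  refine h2.congr' ?_
  rw [← nhdsWithin_Ico_eq_nhdsLT (zero_lt_one (α := ℝ))]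
  filter_upwards [self_mem_nhdsWithin] with x hx
  exact (dilog_series hx.1 hx.2).symm

lemma reflection {x : ℝ} (hx0 : 0 < x) (hx : x < 1) :
    dilog x + dilog (1 - x) = π ^ 2 / 6 - Real.log x * Real.log (1 - x) := by
  have key : ∀ y ∈ Set.Ioo (0:ℝ) 1, HasDerivAt
      (fun y => dilog y + dilog (1 - y) - Real.log y * (-Real.log (1 - y))) 0 y := by
    intro y hy
    have hy1 : y < 1 := hy.2
    have hy0 : 0 < y := hy.1
    have hne : 1 - y ≠ 0 := by linarith
    have h2 : HasDerivAt (fun y : ℝ => dilog (1 - y)) _ y :=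
      HasDerivAt.comp y (dilog_deriv (by linarith : 1 - y < 1)) ((hasDerivAt_id y).const_sub 1)
    have h3 := ((dilog_deriv hy1).add h2).sub ((Real.hasDerivAt_log hy0.ne').mul (neglog_deriv hy1))
    convert! h3 using 1
    rw [hker_ne hy0.ne', hker_ne hne]
    simp
    field_simp
    ring
  set F : ℝ → ℝ := fun y => dilog y + dilog (1 - y) - Real.log y * (-Real.log (1 - y)) with hF
  have hlim : Filter.Tendsto F (nhdsWithin 0 (Set.Ioi 0)) (nhds (0 + π ^ 2 / 6 - 0)) := by
    refine (Filter.Tendsto.add ?_ ?_).sub ?_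
    · have := (dilog_deriv one_pos).continuousAt.tendsto
      rw [dilog_zero] at this
      exact this.mono_left nhdsWithin_le_nhds
    · refine dilog_lim.comp ?_
      refine tendsto_nhdsWithin_iff.mpr ⟨?_, ?_⟩
      · have : Filter.Tendsto (fun y : ℝ => 1 - y) (nhds 0) (nhds (1 - 0)) :=
          (continuous_const.sub continuous_id).tendsto 0
        rw [sub_zero] at this
        exact this.mono_left nhdsWithin_le_nhds
      · filter_upwards [self_mem_nhdsWithin] with y hy
        have : 0 < y := hy
        simp [this]
    · have a1 : Filter.Tendsto (fun y : ℝ => Real.log y * y) (nhdsWithin 0 (Set.Ioi 0)) (nhds 0) := by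
        simpa using tendsto_log_mul_rpow_nhdsGT_zero (zero_lt_one (α := ℝ))
      have a2 : Filter.Tendsto hker (nhdsWithin 0 (Set.Ioi 0)) (nhds (hker 0)) :=
        (hker_cont.continuousAt (Iio_mem_nhds one_pos)).tendsto.mono_left nhdsWithin_le_nhds
      have a3 := a1.mul a2
      rw [zero_mul] at a3
      refine a3.congr' ?_
      filter_upwards [self_mem_nhdsWithin] with y hy
      have hy' : 0 < y := hy
      rw [hker_ne hy'.ne']
      field_simp
  have hconst : Filter.Tendsto F (nhdsWithin 0 (Set.Ioi 0)) (nhds (F x)) := by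
    refine tendsto_const_nhds.congr' ?_
    filter_upwards [Ioo_mem_nhdsGT (zero_lt_one (α := ℝ))] with y hy
    exact const_of_deriv_s2 isOpen_Ioo (convex_Ioo _ _) key ⟨hx0, hx⟩ hy
  have := tendsto_nhds_unique hconst hlim
  simp only [hF] at this
  linarith

lemma dilog_ladder :
    dilog (2/3) + dilog (-8) / 3 - dilog (-2) = π ^ 2 / 6 - (1/2) * Real.log 3 ^ 2 := by
  have l1 := landen (by norm_num : (-2:ℝ) < 1)
  have l2 := landen (by norm_num : (-8:ℝ) < 1)
  have l3 := landen (by norm_num : (-1/3:ℝ) < 1)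
  have l4 := landen (by norm_num : (-1/2:ℝ) < 1)
  have r1 := reflection (by norm_num : (0:ℝ) < 2/3) (by norm_num)
  have r2 := reflection (by norm_num : (0:ℝ) < 8/9) (by norm_num)
  have r3 := reflection (by norm_num : (0:ℝ) < 1/2) (by norm_num)
  have d1 := dup (by norm_num : (-1:ℝ) < 1/3) (by norm_num)
  have d2 := dup (by norm_num : (-1:ℝ) < 1/2) (by norm_num)
  have g2 : Real.log (2/3) = Real.log 2 - Real.log 3 := Real.log_div (by norm_num) (by norm_num)
  have g3 : Real.log (1/3) = - Real.log 3 := by rw [one_div, Real.log_inv]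
  have g4 : Real.log (8/9) = 3 * Real.log 2 - 2 * Real.log 3 := by
    rw [Real.log_div (by norm_num) (by norm_num), (by norm_num : (8:ℝ) = 2 ^ 3),
      (by norm_num : (9:ℝ) = 3 ^ 2), Real.log_pow, Real.log_pow]
    norm_num
  have g9 : Real.log 9 = 2 * Real.log 3 := by
    rw [(by norm_num : (9:ℝ) = 3 ^ 2), Real.log_pow]
    norm_num
  have g5 : Real.log (1/9) = - (2 * Real.log 3) := by rw [one_div, Real.log_inv, g9]
  have g6 : Real.log (4/3) = 2 * Real.log 2 - Real.log 3 := by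
    rw [Real.log_div (by norm_num) (by norm_num), (by norm_num : (4:ℝ) = 2 ^ 2), Real.log_pow]
    norm_num
  have g7 : Real.log (3/2) = Real.log 3 - Real.log 2 := Real.log_div (by norm_num) (by norm_num)
  have g8 : Real.log (1/2) = - Real.log 2 := by rw [one_div, Real.log_inv]
  norm_num only at l1 l2 l3 l4 r1 r2 r3 d1 d2
  simp only [g2, g3, g4, g5, g6, g7, g8, g9] at l1 l2 l3 l4 r1 r2 r3 d1 d2
  linarith

lemma beta_nat_s2 (b : ℕ) : ∀ a : ℕ, ∫ x in (0:ℝ)..1, x ^ a * (1 - x) ^ b =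
    (a.factorial : ℝ) * b.factorial / (a + b + 1).factorial := by
  induction b with
  | zero =>
    intro a
    simp [integral_pow, Nat.factorial_succ]
    have : (a.factorial : ℝ) ≠ 0 := by positivity
    field_simp
  | succ b ih =>
    intro a
    have hd : ∀ x ∈ Set.uIcc (0:ℝ) 1, HasDerivAt (fun x : ℝ => x ^ (a + 1) * (1 - x) ^ (b + 1))
        (((a:ℝ) + 1) * (x ^ a * (1 - x) ^ (b + 1)) - ((b:ℝ) + 1) * (x ^ (a + 1) * (1 - x) ^ b)) x := by
      intro x _
      have h1 : HasDerivAt (fun t : ℝ => 1 - t) (-1) x := by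
        simpa using (hasDerivAt_id x).const_sub 1
      have h2 := (hasDerivAt_pow (a + 1) x).mul (h1.pow (b + 1))
      convert! h2 using 1
      simp
      ring
    have hi := intervalIntegral.integral_eq_sub_of_hasDerivAt hd
      (Continuous.intervalIntegrable (by fun_prop) _ _)
    rw [intervalIntegral.integral_sub (Continuous.intervalIntegrable (by fun_prop) _ _)
      (Continuous.intervalIntegrable (by fun_prop) _ _), intervalIntegral.integral_const_mul,
      intervalIntegral.integral_const_mul, ih (a + 1)] at hi
    simp at hi
    have e : a + (b + 1) + 1 = a + 1 + b + 1 := by ring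
    rw [e]
    have hf : ((a + 1 + b + 1).factorial : ℝ) ≠ 0 := by positivity
    have ha : (a:ℝ) + 1 ≠ 0 := by positivity
    apply mul_left_cancel₀ ha
    rw [sub_eq_zero.mp hi, Nat.factorial_succ a, Nat.factorial_succ b]
    push_cast
    ring

lemma term_eq (k : ℕ) :
    ∫ x in (0:ℝ)..1, (8/3 : ℝ) ^ (k + 1) / ((k:ℝ) + 1) * (x ^ k * (1 - x) ^ (2 * k + 2)) =
    (8/3 : ℝ)^(k+1) / (((k:ℝ)+1)^2 * (((3*(k+1)).choose (k+1) : ℕ) : ℝ)) := by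
  rw [intervalIntegral.integral_const_mul, beta_nat_s2]
  have e : k + (2 * k + 2) + 1 = 3 * (k + 1) := by ring
  rw [e, Nat.cast_choose ℝ (by omega : k + 1 ≤ 3 * (k + 1)),
    (by omega : 3 * (k + 1) - (k + 1) = 2 * k + 2), Nat.factorial_succ k]
  have h1 : (k.factorial : ℝ) ≠ 0 := by positivity
  have h2 : ((2 * k + 2).factorial : ℝ) ≠ 0 := by positivity
  have h3 : ((3 * (k + 1)).factorial : ℝ) ≠ 0 := by positivity
  have h4 : (k:ℝ) + 1 ≠ 0 := by positivity
  push_cast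
  field_simp

lemma cubic_bound {x : ℝ} (h0 : 0 ≤ x) (h1 : x ≤ 1) : x * (1 - x) ^ 2 ≤ 4 / 27 := by
  nlinarith [mul_nonneg (sq_nonneg (x - 1/3)) (by linarith : 0 ≤ 4/3 - x)]

noncomputable def integrand (x : ℝ) : ℝ :=
  2/3 * hker (2/3 * x) - 8 * x ^ 2 * hker (-8 * x ^ 3) + 2 * hker (-2 * x)

lemma integrand_sum {x : ℝ} (h0 : 0 < x) (h1 : x ≤ 1) :
    HasSum (fun k : ℕ => (8/3 : ℝ) ^ (k + 1) / ((k:ℝ) + 1) * (x ^ k * (1 - x) ^ (2 * k + 2)))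
      (integrand x) := by
  have hb := cubic_bound h0.le h1
  have hn : 0 ≤ x * (1 - x) ^ 2 := by positivity
  have h := (Real.hasSum_pow_div_log_of_abs_lt_one (x := 8/3 * (x * (1 - x) ^ 2))
    (by rw [abs_lt]; constructor <;> linarith)).div_const x
  have hx3 : 0 < x ^ 3 := by positivity
  have hq : 0 < 1 - 2 * x + 4 * x ^ 2 := by nlinarith [sq_nonneg (1 - 4 * x)]
  have e1 : (1 - -8 * x ^ 3) = (1 - -2 * x) * (1 - 2 * x + 4 * x ^ 2) := by ring
  have e2 : 1 - 8/3 * (x * (1 - x) ^ 2) = (1 - 2/3 * x) * (1 - 2 * x + 4 * x ^ 2) := by ring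
  convert! h using 1
  · ext k
    rw [mul_pow, mul_pow, ← pow_mul, (by ring : 2 * (k + 1) = 2 * k + 2), pow_succ x k]
    field_simp
  · unfold integrand
    rw [hker_ne (by positivity), hker_ne (by nlinarith), hker_ne (by linarith), e1, e2,
      Real.log_mul (by linarith) hq.ne', Real.log_mul (by linarith) hq.ne']
    field_simp
    ring

lemma integrand_integral : ∫ x in (0:ℝ)..1, integrand x =
    dilog (2/3) + dilog (-8) / 3 - dilog (-2) := by
  have hd : ∀ x ∈ Set.uIcc (0:ℝ) 1, HasDerivAt
      (fun x => dilog (2/3 * x) + dilog (-8 * x ^ 3) / 3 - dilog (-2 * x)) (integrand x) x := by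
    intro x hx
    rw [Set.uIcc_of_le zero_le_one] at hx
    have hx0 := hx.1
    have hx1 := hx.2
    have hx3 : 0 ≤ x ^ 3 := by positivity
    have h1 : HasDerivAt (fun y : ℝ => dilog (2/3 * y)) _ x :=
      HasDerivAt.comp x (dilog_deriv (by linarith)) ((hasDerivAt_id x).const_mul (2/3))
    have h2 : HasDerivAt (fun y : ℝ => dilog (-8 * y ^ 3)) _ x :=
      HasDerivAt.comp x (dilog_deriv (by linarith)) ((hasDerivAt_pow 3 x).const_mul (-8))
    have h3 : HasDerivAt (fun y : ℝ => dilog (-2 * y)) _ x :=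
      HasDerivAt.comp x (dilog_deriv (by linarith)) ((hasDerivAt_id x).const_mul (-2))
    have h4 := (h1.add (h2.div_const 3)).sub h3
    convert! h4 using 1
    unfold integrand
    simp
    ring
  rw [intervalIntegral.integral_eq_sub_of_hasDerivAt hd]
  · simp [dilog_zero]
  · apply ContinuousOn.intervalIntegrable
    rw [Set.uIcc_of_le zero_le_one]
    unfold integrand
    refine ((continuousOn_const.mul (hker_cont.comp (by fun_prop) ?_)).sub
      (ContinuousOn.mul (by fun_prop) (hker_cont.comp (by fun_prop) ?_))).add
      (continuousOn_const.mul (hker_cont.comp (by fun_prop) ?_))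
    · intro x hx
      simp only [Set.mem_Iio]
      linarith [hx.2]
    · intro x hx
      have : 0 ≤ x ^ 3 := pow_nonneg hx.1 3
      simp only [Set.mem_Iio]
      linarith
    · intro x hx
      simp only [Set.mem_Iio]
      linarith [hx.1]

theorem stmt_2 :
    ∑' k : ℕ, (8/3 : ℝ)^(k+1) / (((k:ℝ)+1)^2 * (((3*(k+1)).choose (k+1) : ℕ) : ℝ)) =
    π^2/6 - (1/2)*(Real.log 3)^2 := by
  rw [← dilog_ladder, ← integrand_integral]
  simp_rw [← term_eq]
  refine HasSum.tsum_eq ?_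
  refine intervalIntegral.hasSum_integral_of_dominated_convergence
    (fun k _ => 8/3 * (32/81 : ℝ) ^ k) ?_ ?_ ?_ ?_ ?_
  · intro k
    exact Continuous.aestronglyMeasurable (by fun_prop)
  · intro k
    refine Filter.Eventually.of_forall fun x hx => ?_
    rw [Set.uIoc_of_le zero_le_one] at hx
    have h0 := hx.1.le
    have h1 : 0 ≤ 1 - x := by linarith [hx.2]
    rw [Real.norm_of_nonneg (by positivity)]
    have e : (8/3 : ℝ) ^ (k + 1) / ((k:ℝ) + 1) * (x ^ k * (1 - x) ^ (2 * k + 2)) =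
        8/3 * (8/3 * (x * (1 - x) ^ 2)) ^ k * ((1 - x) ^ 2 / ((k:ℝ) + 1)) := by
      rw [mul_pow, mul_pow, ← pow_mul]
      ring
    rw [e]
    have hb := cubic_bound h0 hx.2
    have hq : (1 - x) ^ 2 / ((k:ℝ) + 1) ≤ 1 := by
      rw [div_le_one (by positivity)]
      nlinarith [(Nat.cast_nonneg k : (0:ℝ) ≤ k), hx.1]
    calc _ ≤ 8/3 * (8/3 * (x * (1 - x) ^ 2)) ^ k * 1 := by gcongr
      _ = 8/3 * (8/3 * (x * (1 - x) ^ 2)) ^ k := by ring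
      _ ≤ _ := by
        gcongr
        linarith
  · refine Filter.Eventually.of_forall fun x _ => ?_
    exact (summable_geometric_of_lt_one (by norm_num) (by norm_num)).mul_left _
  · exact intervalIntegrable_const
  · refine Filter.Eventually.of_forall fun x hx => ?_
    rw [Set.uIoc_of_le zero_le_one] at hx
    exact integrand_sum hx.1 hx.2
end

section
/- ∑_{k=1}^∞ (1728/4225)^k / (k² · C(3k,k)) = 6·arctan²(√3/7) − (1/2)·log²(25/13). -/
open Real

theorem beta_aux (m n : ℕ) : ∫ t in (0:ℝ)..1, t^m * (1-t)^n
    = (m.factorial * n.factorial : ℝ) / ((m+n+1).factorial : ℝ) := by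
  induction m generalizing n with
  | zero =>
    have h : ∀ t ∈ Set.uIcc (0:ℝ) 1,
        HasDerivAt (fun t : ℝ => -((1-t)^(n+1)) / ((n:ℝ)+1)) (t^0*(1-t)^n) t := by
      intro t _
      have hn : (n:ℝ)+1 ≠ 0 := by positivity
      have h1 : HasDerivAt (fun t : ℝ => 1 - t) (-1) t := by
        simpa using (hasDerivAt_id t).const_sub 1
      have := ((h1.pow (n+1)).neg).div_const ((n:ℝ)+1)
      convert! this using 1
      push_cast
      simp
      field_simp
    rw [intervalIntegral.integral_eq_sub_of_hasDerivAt h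
      ((by fun_prop : Continuous fun t : ℝ => t^0*(1-t)^n).intervalIntegrable _ _)]
    have : (n.factorial:ℝ) ≠ 0 := by positivity
    have hn : (n:ℝ)+1 ≠ 0 := by positivity
    simp [Nat.factorial_succ]
    field_simp
  | succ m ih =>
    have h : ∀ t ∈ Set.uIcc (0:ℝ) 1,
        HasDerivAt (fun t : ℝ => t^(m+1) * (1-t)^(n+1))
          (((m:ℝ)+1) * (t^m*(1-t)^(n+1)) - ((n:ℝ)+1) * (t^(m+1)*(1-t)^n)) t := by
      intro t _
      have h1 : HasDerivAt (fun t : ℝ => 1 - t) (-1) t := by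
        simpa using (hasDerivAt_id t).const_sub 1
      have := (hasDerivAt_pow (m+1) t).mul (h1.pow (n+1))
      convert! this using 1
      push_cast
      simp
      ring
    have h2 := intervalIntegral.integral_eq_sub_of_hasDerivAt h
      ((by fun_prop : Continuous fun t : ℝ => ((m:ℝ)+1) * (t^m*(1-t)^(n+1)) - ((n:ℝ)+1) * (t^(m+1)*(1-t)^n)).intervalIntegrable _ _)
    rw [intervalIntegral.integral_sub
      ((by fun_prop : Continuous fun t : ℝ => ((m:ℝ)+1) * (t^m*(1-t)^(n+1))).intervalIntegrable _ _)
      ((by fun_prop : Continuous fun t : ℝ => ((n:ℝ)+1) * (t^(m+1)*(1-t)^n)).intervalIntegrable _ _),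
      intervalIntegral.integral_const_mul, intervalIntegral.integral_const_mul, ih (n+1)] at h2
    simp at h2
    have hn : (n:ℝ)+1 ≠ 0 := by positivity
    have e : m + (n+1) + 1 = m + 1 + n + 1 := by ring
    rw [e] at h2
    apply mul_left_cancel₀ hn
    rw [← sub_eq_zero.mp h2]
    simp only [Nat.factorial_succ m, Nat.factorial_succ n]
    push_cast
    ring

theorem coef_aux (k : ℕ) : ∫ t in (0:ℝ)..1, t^k * (1-t)^(2*k+2)
    = 1 / (((k:ℝ)+1) * (((3*(k+1)).choose (k+1) : ℕ) : ℝ)) := by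
  rw [beta_aux]
  have h := Nat.add_choose_mul_factorial_mul_factorial (k+1) (2*k+2)
  have e : k + 1 + (2*k+2) = 3*(k+1) := by ring
  have e2 : k + (2*k+2) + 1 = 3*(k+1) := by ring
  have e3 : (3*(k+1)).choose (2*k+2) = (3*(k+1)).choose (k+1) :=
    Nat.choose_symm_of_eq_add (by ring)
  rw [e, e3] at h
  rw [e2, ← h]
  have h1 : 0 < (3*(k+1)).choose (k+1) := Nat.choose_pos (by omega)
  have h2 : ((3*(k+1)).choose (k+1) : ℝ) ≠ 0 := by positivity
  have h3 : (k.factorial:ℝ) ≠ 0 := by positivity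
  have h4 : ((2*k+2).factorial:ℝ) ≠ 0 := by positivity
  have h5 : (k:ℝ)+1 ≠ 0 := by positivity
  rw [Nat.factorial_succ k]
  push_cast
  field_simp

theorem range_aux {t : ℝ} (h0 : 0 ≤ t) (h1 : t ≤ 1) : 0 ≤ t*(1-t)^2 ∧ t*(1-t)^2 ≤ 1 := by
  have a : 0 ≤ 1 - t := by linarith
  refine ⟨by positivity, ?_⟩
  have : (1-t)^2 ≤ 1 := by nlinarith
  nlinarith [sq_nonneg (1-t)]

theorem deriv_sum_aux {z : ℝ} (hz : |z| < 1/2) :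
    ∑' k : ℕ, z^k / (((k:ℝ)+1) * (((3*(k+1)).choose (k+1) : ℕ) : ℝ))
      = ∫ t in (0:ℝ)..1, (1-t)^2 / (1 - z*(t*(1-t)^2)) := by
  have h := intervalIntegral.hasSum_integral_of_dominated_convergence (a := 0) (b := 1)
    (μ := MeasureTheory.volume)
    (F := fun (k:ℕ) (t:ℝ) => z^k * (t^k * (1-t)^(2*k+2)))
    (f := fun t => (1-t)^2 / (1 - z*(t*(1-t)^2)))
    (fun k _ => (1/2:ℝ)^k)
    (fun k => (by fun_prop : Continuous fun t:ℝ => z^k * (t^k * (1-t)^(2*k+2))).aestronglyMeasurable)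
    ?_ ?_ ?_ ?_
  · rw [← h.tsum_eq]
    congr 1
    ext k
    rw [intervalIntegral.integral_const_mul, coef_aux]
    ring
  · intro k
    filter_upwards with t ht
    rw [Set.uIoc_of_le zero_le_one] at ht
    obtain ⟨r0, r1⟩ := range_aux ht.1.le ht.2
    have e : z^k * (t^k * (1-t)^(2*k+2)) = (z * (t*(1-t)^2))^k * (1-t)^2 := by
      rw [mul_pow, mul_pow, ← pow_mul]; ring
    rw [e, norm_mul, norm_pow, norm_mul, norm_of_nonneg r0, norm_of_nonneg (sq_nonneg (1-t)),
      Real.norm_eq_abs]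
    have : (1-t)^2 ≤ 1 := by nlinarith [ht.1, ht.2]
    calc (|z| * (t*(1-t)^2))^k * (1-t)^2 ≤ (1/2*1)^k * 1 := by gcongr
      _ = (1/2)^k := by ring
  · filter_upwards with t ht
    exact summable_geometric_of_lt_one (by norm_num) (by norm_num)
  · exact intervalIntegrable_const
  · filter_upwards with t ht
    rw [Set.uIoc_of_le zero_le_one] at ht
    obtain ⟨r0, r1⟩ := range_aux ht.1.le ht.2
    have hb : |z * (t*(1-t)^2)| < 1 := by
      rw [abs_mul, abs_of_nonneg r0]
      nlinarith [abs_nonneg z]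
    have := (hasSum_geometric_of_abs_lt_one hb).mul_left ((1-t)^2)
    convert! this using 1
    ext k
    rw [mul_pow, mul_pow, ← pow_mul]; ring

theorem F_deriv {z : ℝ} (hz : |z| < 1/2) :
    HasDerivAt (fun z : ℝ => ∑' k : ℕ, z^(k+1) / (((k:ℝ)+1)^2 * (((3*(k+1)).choose (k+1) : ℕ) : ℝ)))
      (∫ t in (0:ℝ)..1, (1-t)^2 / (1 - z*(t*(1-t)^2))) z := by
  rw [← deriv_sum_aux hz]
  refine hasDerivAt_tsum_of_isPreconnected (𝕜 := ℝ) (F := ℝ) (t := Metric.ball 0 (1/2))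
    (g := fun (k:ℕ) z => z^(k+1) / (((k:ℝ)+1)^2 * (((3*(k+1)).choose (k+1) : ℕ) : ℝ)))
    (g' := fun (k:ℕ) z => z^k / (((k:ℝ)+1) * (((3*(k+1)).choose (k+1) : ℕ) : ℝ))) (u := fun k : ℕ => (1/2:ℝ)^k)
    (y₀ := 0)
    (summable_geometric_of_lt_one (by norm_num) (by norm_num)) Metric.isOpen_ball
    (convex_ball _ _).isPreconnected ?_ ?_ (by simp) (by simp [summable_zero]) (by simpa using hz)
  · intro k y _
    have h1 : 0 < (3*(k+1)).choose (k+1) := Nat.choose_pos (by omega)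
    have h2 : ((3*(k+1)).choose (k+1) : ℝ) ≠ 0 := by positivity
    have h5 : (k:ℝ)+1 ≠ 0 := by positivity
    have := (hasDerivAt_pow (k+1) y).div_const (((k:ℝ)+1)^2 * (((3*(k+1)).choose (k+1) : ℕ) : ℝ))
    convert! this using 1
    simp
    field_simp
  · intro k y hy
    have h1 : 0 < (3*(k+1)).choose (k+1) := Nat.choose_pos (by omega)
    have h2 : (1:ℝ) ≤ ((3*(k+1)).choose (k+1) : ℝ) := by exact_mod_cast h1
    have h3 : (1:ℝ) ≤ (k:ℝ)+1 := by simp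
    have hy : |y| < 1/2 := by simpa using hy
    have h4 : (1:ℝ) ≤ ((k:ℝ)+1) * (((3*(k+1)).choose (k+1) : ℕ) : ℝ) := by nlinarith
    rw [norm_div, norm_pow, Real.norm_eq_abs, Real.norm_of_nonneg (by positivity)]
    calc _ ≤ |y|^k := div_le_self (by positivity) h4
      _ ≤ _ := by gcongr

theorem arctan_aux {w : ℝ} (hw : 0 < w) :
    arctan (1/w) - arctan ((w^2-1)/(2*w)) = π - 3 * arctan w := by
  have h1 : arctan (1/w) = π/2 - arctan w := by
    rw [one_div]; exact arctan_inv_of_pos hw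
  have h2 : arctan ((w^2-1)/(2*w)) = 2 * arctan w - π/2 := by
    have p0 := arctan_pos.mpr hw
    have p1 := arctan_lt_pi_div_two w
    rw [← arctan_tan (x := 2 * arctan w - π/2) (by linarith) (by linarith)]
    congr 1
    have e : 2 * arctan w - π/2 = -(π/2 - 2 * arctan w) := by ring
    rw [e, tan_neg, tan_pi_div_two_sub, tan_two_mul, tan_arctan]
    rw [inv_div, ← neg_div]
    ring
  rw [h1, h2]; ring

theorem integral_aux {u : ℝ} (h0 : 0 < u) (h1 : u ≤ 12/25) :
    ∫ t in (0:ℝ)..1, (1-t)^2 / (1 - (u^3/(1-u)^2)*(t*(1-t)^2)) =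
      ((1-u)^2/(u^2*(3-u))) * (log (1-u) + 6*(π/3 - arctan (sqrt (3-4*u)))/sqrt (3-4*u)) := by
  have hw2 : sqrt (3-4*u)^2 = 3-4*u := sq_sqrt (by linarith)
  have hw : 0 < sqrt (3-4*u) := sqrt_pos.mpr (by linarith)
  set w := sqrt (3-4*u) with hwdef
  have hu1 : 0 < 1 - u := by linarith
  have hu3 : 0 < 3 - u := by linarith
  have hq : ∀ t : ℝ, 0 < (1-u)^2 + u*(1-2*u)*t + u^2*t^2 := by
    intro t
    nlinarith [sq_nonneg (u*t+(1-2*u)/2)]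
  have hl : ∀ t : ℝ, t ≤ 1 → 0 < 1 - u*t := by
    intro t ht
    nlinarith
  have hD : ∀ t : ℝ, 1 - (u^3/(1-u)^2)*(t*(1-t)^2)
      = (1-u*t)*((1-u)^2 + u*(1-2*u)*t + u^2*t^2)/(1-u)^2 := by
    intro t; field_simp; ring
  have hd : ∀ t ∈ Set.uIcc (0:ℝ) 1,
      HasDerivAt (fun t : ℝ => ((1-u)^2/(u^2*(3-u))) * (-((1-u)/u) * log (1-u*t)
          - (1/u) * log ((1-u)^2 + u*(1-2*u)*t + u^2*t^2)
          + (2/w) * arctan ((2*u*t+1-2*u)/w)))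
        ((1-t)^2 / (1 - (u^3/(1-u)^2)*(t*(1-t)^2))) t := by
    intro t ht
    rw [Set.uIcc_of_le zero_le_one] at ht
    have a1 : HasDerivAt (fun t : ℝ => 1 - u*t) (-u) t := by
      simpa using ((hasDerivAt_id t).const_mul u).const_sub 1
    have a2 : HasDerivAt (fun t : ℝ => (1-u)^2 + u*(1-2*u)*t + u^2*t^2)
        (u*(1-2*u) + u^2*(2*t)) t := by
      have := (((hasDerivAt_id t).const_mul (u*(1-2*u))).const_add ((1-u)^2)).add
        ((hasDerivAt_pow 2 t).const_mul (u^2))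
      convert! this using 1
      simp
    have a3 : HasDerivAt (fun t : ℝ => (2*u*t+1-2*u)/w) (2*u/w) t := by
      have := ((((hasDerivAt_id t).const_mul (2*u)).add_const 1).sub_const (2*u)).div_const w
      convert! this using 1
      simp
    have p1 := (hl t ht.2).ne'
    have p2 := (hq t).ne'
    have := ((((a1.log p1).const_mul (-((1-u)/u))).sub ((a2.log p2).const_mul (1/u))).add
      (a3.arctan.const_mul (2/w))).const_mul ((1-u)^2/(u^2*(3-u)))
    convert! this using 1
    rw [hD]
    have e : (2/w) * (1/(1+((2*u*t+1-2*u)/w)^2) * (2*u/w))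
        = u/((1-u)^2 + u*(1-2*u)*t + u^2*t^2) := by
      have e1 : 1+((2*u*t+1-2*u)/w)^2 = 4*((1-u)^2 + u*(1-2*u)*t + u^2*t^2)/w^2 := by
        field_simp
        rw [hw2]; ring
      rw [e1]
      field_simp
      norm_num
    rw [e]
    generalize hQ : (1-u)^2 + u*(1-2*u)*t + u^2*t^2 = Q at *
    generalize hL : 1 - u*t = L at *
    field_simp
    rw [← hQ, ← hL]
    ring
  rw [intervalIntegral.integral_eq_sub_of_hasDerivAt hd]
  · have e1 : (1-u)^2 + u*(1-2*u)*1 + u^2*1^2 = 1-u := by ring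
    have e0 : (1-u)^2 + u*(1-2*u)*0 + u^2*0^2 = (1-u)^2 := by ring
    have e2 : (2*u*1+1-2*u)/w = 1/w := by ring
    have e3 : (2*u*0+1-2*u)/w = (w^2-1)/(2*w) := by rw [hw2]; field_simp; ring
    have e4 := arctan_aux hw
    rw [e1, e0, e2, e3, log_pow]
    have e5 : arctan (1/w) = arctan ((w^2-1)/(2*w)) + (π - 3 * arctan w) := by linarith
    rw [e5]
    simp
    field_simp
    ring
  · apply ContinuousOn.intervalIntegrable
    apply ContinuousOn.div (by fun_prop) (by fun_prop)
    intro t ht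
    rw [Set.uIcc_of_le zero_le_one] at ht
    rw [hD]
    have p1 := hl t ht.2
    have p2 := hq t
    positivity

theorem z_bound {u : ℝ} (h0 : 0 ≤ u) (h1 : u ≤ 12/25) : |u^3/(1-u)^2| < 1/2 := by
  have hu1 : 0 < 1 - u := by linarith
  rw [abs_of_nonneg (by positivity)]
  calc u^3/(1-u)^2 ≤ (12/25)^3/(1-12/25)^2 := by gcongr
    _ < 1/2 := by norm_num

theorem stmt_9 :
    ∑' k : ℕ, (1728/4225 : ℝ)^(k+1) / (((k:ℝ)+1)^2 * (((3*(k+1)).choose (k+1) : ℕ) : ℝ)) =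
    6*(Real.arctan (Real.sqrt 3/7))^2 - (1/2)*(Real.log (25/13))^2 := by
  set F : ℝ → ℝ := fun z : ℝ =>
    ∑' k : ℕ, z^(k+1) / (((k:ℝ)+1)^2 * (((3*(k+1)).choose (k+1) : ℕ) : ℝ)) with hF
  set Φ : ℝ → ℝ := fun u => F (u^3/(1-u)^2) -
    (6*(π/3 - arctan (sqrt (3-4*u)))^2 - (1/2)*(log (1-u))^2) with hΦ
  have hd : ∀ u : ℝ, 0 ≤ u → u ≤ 12/25 → HasDerivAt Φ
      ((∫ t in (0:ℝ)..1, (1-t)^2 / (1 - (u^3/(1-u)^2)*(t*(1-t)^2))) * (u^2*(3-u)/(1-u)^3)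
        - (6*(π/3 - arctan (sqrt (3-4*u)))/sqrt (3-4*u) + log (1-u))/(1-u)) u := by
    intro u h0 h1
    have hu1 : 0 < 1 - u := by linarith
    have hw2 : sqrt (3-4*u)^2 = 3-4*u := sq_sqrt (by linarith)
    have hw : 0 < sqrt (3-4*u) := sqrt_pos.mpr (by linarith)
    have b1 : HasDerivAt (fun u : ℝ => 1 - u) (-1) u := by
      simpa using (hasDerivAt_id u).const_sub 1
    have b2 : HasDerivAt (fun u : ℝ => u^3/(1-u)^2) (u^2*(3-u)/(1-u)^3) u := by
      have := (hasDerivAt_pow 3 u).div (b1.pow 2) (pow_ne_zero 2 hu1.ne')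
      convert! this using 1
      simp
      field_simp
      ring
    have b3 : HasDerivAt (fun u : ℝ => 3-4*u) (-4) u := by
      simpa using ((hasDerivAt_id u).const_mul 4).const_sub 3
    have b4 := (((b3.sqrt (by linarith : 3-4*u ≠ 0)).arctan.const_sub (π/3)).pow 2).const_mul 6
    have b5 := ((b1.log hu1.ne').pow 2).const_mul (1/2)
    have b6 := (HasDerivAt.comp u (F_deriv (z_bound h0 h1)) b2).sub (b4.sub b5)
    convert! b6 using 1
    rw [hw2]
    congr 1
    have e : 1 + (3 - 4*u) = 4*(1-u) := by ring
    rw [e]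
    simp
    field_simp
    ring
  obtain ⟨c, hc, hc2⟩ := exists_hasDerivAt_eq_slope Φ _ (by norm_num : (0:ℝ) < 12/25)
    (fun u hu => (hd u hu.1 hu.2).continuousAt.continuousWithinAt)
    (fun u hu => hd u hu.1.le hu.2.le)
  have hz : Φ (12/25) = Φ 0 := by
    rw [integral_aux hc.1 hc.2.le] at hc2
    have hw : 0 < sqrt (3-4*c) := sqrt_pos.mpr (by linarith [hc.2])
    have q1 : 0 < 1 - c := by linarith [hc.2]
    have q2 : 0 < 3 - c := by linarith [hc.2]
    have q3 := hc.1
    have e : ∀ X : ℝ, (1-c)^2/(c^2*(3-c)) * X * (c^2*(3-c)/(1-c)^3) = X/(1-c) := by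
      intro X; field_simp
    rw [e, add_comm, sub_self] at hc2
    rw [eq_comm, div_eq_zero_iff] at hc2
    rcases hc2 with h | h
    · linarith
    · norm_num at h
  have h0 : Φ 0 = 0 := by
    simp [hΦ, hF, arctan_sqrt_three]
  rw [h0] at hz
  have h3 : sqrt (3-4*(12/25)) = 3*sqrt 3/5 := by
    rw [show (3-4*(12/25):ℝ) = 3 * (3/5)^2 by norm_num, sqrt_mul (by norm_num),
      sqrt_sq (by norm_num)]
    ring
  have hs : sqrt 3 ^ 2 = 3 := sq_sqrt (by norm_num)
  have hs0 : 0 < sqrt 3 := sqrt_pos.mpr (by norm_num)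
  have h4 : π/3 - arctan (3*sqrt 3/5) = arctan (sqrt 3/7) := by
    have : arctan (sqrt 3/7) + arctan (3*sqrt 3/5) = arctan (sqrt 3) := by
      rw [arctan_add (by nlinarith)]
      congr 1
      have : 1 - sqrt 3/7*(3*sqrt 3/5) = 26/35 := by nlinarith
      rw [this]; ring
    rw [arctan_sqrt_three] at this
    linarith
  have h5 : log (1-12/25) = - log (25/13) := by
    rw [← log_inv]; norm_num
  have h6 : ((12/25:ℝ)^3/(1-12/25)^2) = 1728/4225 := by norm_num
  simp only [hΦ] at hz
  rw [h3, h4, h5, h6] at hz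
  change F (1728/4225) = _
  linarith [neg_sq (log (25/13))]
end

section
/- ∑_{k=1}^∞ (5832/1225)^k / (k² · C(3k,k)) = 6·arctan²(√3/2) − (1/2)·log²(25/7). -/
open Real
lemma aux_beta (m : ℕ) : ∀ n : ℕ, ∫ x in (0:ℝ)..1, x^m*(1-x)^n = (m.factorial * n.factorial : ℝ)/((m+n+1).factorial : ℝ) := by
  induction m with
  | zero =>
    intro n
    have h : ∫ x in (0:ℝ)..1, (1-x)^n = ∫ x in (0:ℝ)..1, x^n := by
      have := intervalIntegral.integral_comp_sub_left (a := (0:ℝ)) (b := 1) (fun x : ℝ => x^n) 1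
      simpa using this
    simp only [pow_zero, one_mul, h, integral_pow]
    have : (n.factorial : ℝ) ≠ 0 := by positivity
    simp [Nat.factorial_succ]
    field_simp
  | succ m ih =>
    intro n
    have hd : ∀ x ∈ Set.uIcc (0:ℝ) 1, HasDerivAt (fun x : ℝ => x^(m+1)*(1-x)^(n+1))
        (((m:ℝ)+1)*(x^m*(1-x)^(n+1)) - ((n:ℝ)+1)*(x^(m+1)*(1-x)^n)) x := by
      intro x _
      have h1 := (hasDerivAt_id' x).pow (m+1)
      have h2 := ((hasDerivAt_id' x).const_sub 1).pow (n+1)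
      refine (h1.mul h2).congr_deriv ?_
      simp
      ring
    have h := intervalIntegral.integral_eq_sub_of_hasDerivAt hd
      (by apply Continuous.intervalIntegrable; fun_prop)
    rw [intervalIntegral.integral_sub (by apply Continuous.intervalIntegrable; fun_prop)
      (by apply Continuous.intervalIntegrable; fun_prop), intervalIntegral.integral_const_mul,
      intervalIntegral.integral_const_mul, ih (n+1)] at h
    simp only [sub_self, ne_eq, Nat.add_eq_zero_iff, one_ne_zero, and_false, not_false_eq_true, zero_pow, mul_zero, zero_mul] at h
    have e : m + 1 + n + 1 = m + (n+1) + 1 := by ring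
    rw [e]
    have hn : ((n:ℝ)+1) ≠ 0 := by positivity
    have hf : ((m + (n+1) + 1).factorial : ℝ) ≠ 0 := by positivity
    apply mul_left_cancel₀ hn
    rw [Nat.factorial_succ n] at h
    rw [Nat.factorial_succ m]
    push_cast at h ⊢
    rw [← sub_eq_zero.mp h]
    field_simp

lemma aux_fac (k : ℕ) : (((3*(k+1)).choose (k+1) : ℕ) : ℝ) * ((k+1).factorial * (2*k+2).factorial) = ((3*k+3).factorial : ℝ) := by
  have h := Nat.choose_mul_factorial_mul_factorial (n := 3*(k+1)) (k := k+1) (by omega)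
  have e : 3*(k+1) - (k+1) = 2*k+2 := by omega
  rw [e] at h
  rw [show 3*k+3 = 3*(k+1) by ring, ← h]
  push_cast
  ring

lemma aux_int (k : ℕ) : ∫ x in (0:ℝ)..1, x^k*(1-x)^(2*k+2) = 1/(((k:ℝ)+1) * (((3*(k+1)).choose (k+1) : ℕ) : ℝ)) := by
  rw [aux_beta]
  have h := aux_fac k
  have hc : (0:ℝ) < (((3*(k+1)).choose (k+1) : ℕ) : ℝ) := by
    exact_mod_cast Nat.choose_pos (by omega)
  rw [show k + (2*k+2)+1 = 3*k+3 by ring, ← h, Nat.factorial_succ k]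
  have : (k.factorial : ℝ) ≠ 0 := by positivity
  have : ((2*k+2).factorial : ℝ) ≠ 0 := by positivity
  push_cast
  field_simp

lemma aux_lb (k : ℕ) : (3*5^k : ℝ) ≤ (((3*(k+1)).choose (k+1) : ℕ) : ℝ) := by
  induction k with
  | zero => norm_num [Nat.choose]
  | succ k ih =>
    have h1 := aux_fac k
    have h2 := aux_fac (k+1)
    rw [show 2*(k+1)+2 = 2*k+2+1+1 by ring, show 3*(k+1)+3 = 3*k+3+1+1+1 by ring] at h2
    simp only [Nat.factorial_succ (k+1), Nat.factorial_succ (2*k+2+1), Nat.factorial_succ (2*k+2), Nat.factorial_succ (3*k+3+1+1), Nat.factorial_succ (3*k+3+1), Nat.factorial_succ (3*k+3), Nat.cast_mul, ← h1] at h2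
    set C := (((3*(k+1)).choose (k+1) : ℕ) : ℝ)
    set C' := (((3*(k+1+1)).choose (k+1+1) : ℕ) : ℝ)
    have p : ((k+1).factorial * (2*k+2).factorial : ℝ) ≠ 0 := by positivity
    have h3 : C' * ((k+2)*((2*k+4)*(2*k+3))) = (3*k+6)*(3*k+5)*(3*k+4)*C := by
      apply mul_right_cancel₀ p
      push_cast at h2
      linear_combination h2
    have hk : (0:ℝ) ≤ k := by positivity
    have q : (0:ℝ) < ((k:ℝ)+2)*((2*k+4)*(2*k+3)) := by positivity
    have h4 : 5*C ≤ C' := by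
      apply le_of_mul_le_mul_right _ q
      rw [h3]
      have hC : 0 ≤ C := by positivity
      have : 0 ≤ C * ((3*k+6)*(3*k+5)*(3*k+4) - 5 * (((k:ℝ)+2)*((2*k+4)*(2*k+3)))) := by
        apply mul_nonneg hC
        ring_nf
        positivity
      linarith
    rw [pow_succ]
    linarith
lemma aux_pos (k : ℕ) : (0:ℝ) < (((3*(k+1)).choose (k+1) : ℕ) : ℝ) := by
  exact_mod_cast Nat.choose_pos (by omega)

lemma aux_deriv (z : ℝ) (hz : z ∈ Set.Ioo (-(49/10) : ℝ) (49/10)) :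
    HasDerivAt (fun z : ℝ => ∑' k : ℕ, z^(k+1) / (((k:ℝ)+1)^2 * (((3*(k+1)).choose (k+1) : ℕ) : ℝ)))
      (∑' k : ℕ, z^k / (((k:ℝ)+1) * (((3*(k+1)).choose (k+1) : ℕ) : ℝ))) z := by
  have hu : Summable (fun k : ℕ => (49/50:ℝ)^k) :=
    summable_geometric_of_lt_one (by norm_num) (by norm_num)
  refine hasDerivAt_tsum_of_isPreconnected (y₀ := 0) hu isOpen_Ioo isPreconnected_Ioo
    (g := fun (k : ℕ) (z : ℝ) => z^(k+1) / (((k:ℝ)+1)^2 * (((3*(k+1)).choose (k+1) : ℕ) : ℝ)))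
    (g' := fun (k : ℕ) (z : ℝ) => z^k / (((k:ℝ)+1) * (((3*(k+1)).choose (k+1) : ℕ) : ℝ)))
    ?_ ?_ (by norm_num) ?_ hz
  · intro k y _
    have hc := aux_pos k
    refine (((hasDerivAt_id' y).pow (k+1)).div_const _).congr_deriv ?_
    have : ((k:ℝ)+1) ≠ 0 := by positivity
    simp
    field_simp
  · intro k y hy
    have hc := aux_pos k
    have hl := aux_lb k
    have hk : (0:ℝ) ≤ k := by positivity
    rw [norm_div, norm_pow, Real.norm_eq_abs, Real.norm_of_nonneg (by positivity)]
    have hy' : |y| ≤ 49/10 := (abs_lt.mpr hy).le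
    rw [div_le_iff₀ (by positivity)]
    calc |y|^k ≤ (49/10)^k := by gcongr
      _ = (49/50)^k * (1 * 5^k) := by rw [one_mul, ← mul_pow]; norm_num
      _ ≤ _ := by
        gcongr
        · linarith
        · have : (0:ℝ) < 5^k := by positivity
          linarith
  · simp

lemma aux_cubic (x : ℝ) (h0 : 0 ≤ x) (h1 : x ≤ 1) : x*(1-x)^2 ≤ 4/27 := by
  nlinarith [mul_nonneg (sub_nonneg.2 (show x ≤ 4/3 by linarith)) (sq_nonneg (x-1/3))]

lemma aux_H (z : ℝ) (h0 : 0 ≤ z) (h1 : z < 49/10) :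
    ∑' k : ℕ, z^k / (((k:ℝ)+1) * (((3*(k+1)).choose (k+1) : ℕ) : ℝ)) =
    ∫ x in (0:ℝ)..1, (1-x)^2/(1-z*(x*(1-x)^2)) := by
  have e : ∀ k : ℕ, z^k / (((k:ℝ)+1) * (((3*(k+1)).choose (k+1) : ℕ) : ℝ)) =
      ∫ x in (0:ℝ)..1, (1-x)^2*(z*(x*(1-x)^2))^k := by
    intro k
    rw [div_eq_mul_one_div, ← aux_int k, ← intervalIntegral.integral_const_mul]
    congr 1
    ext x
    rw [mul_pow, mul_pow, ← pow_mul]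
    ring
  simp_rw [e]
  apply HasSum.tsum_eq
  have hb : ∀ x ∈ Set.uIoc (0:ℝ) 1, 0 ≤ z*(x*(1-x)^2) ∧ z*(x*(1-x)^2) ≤ 49/10*(4/27) := by
    intro x hx
    rw [Set.uIoc_of_le zero_le_one] at hx
    have := aux_cubic x hx.1.le hx.2
    have h3 : 0 ≤ x*(1-x)^2 := mul_nonneg hx.1.le (sq_nonneg _)
    exact ⟨by positivity, by gcongr⟩
  have hs : Summable (fun k : ℕ => (49/10*(4/27):ℝ)^k) :=
    summable_geometric_of_lt_one (by norm_num) (by norm_num)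
  refine intervalIntegral.hasSum_integral_of_dominated_convergence
    (fun k _ => (49/10*(4/27):ℝ)^k) ?_ ?_ ?_ ?_ ?_
  · intro k
    apply Continuous.aestronglyMeasurable
    fun_prop
  · intro k
    refine Filter.Eventually.of_forall fun x hx => ?_
    obtain ⟨h2, h3⟩ := hb x hx
    rw [Set.uIoc_of_le zero_le_one] at hx
    have h4 : (1-x)^2 ≤ 1 := by nlinarith [hx.1, hx.2]
    rw [Real.norm_of_nonneg (by positivity)]
    calc (1-x)^2*(z*(x*(1-x)^2))^k ≤ 1 * (49/10*(4/27):ℝ)^k := by gcongr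
      _ = _ := one_mul _
  · exact Filter.Eventually.of_forall fun x hx => hs
  · exact intervalIntegrable_const
  · refine Filter.Eventually.of_forall fun x hx => ?_
    obtain ⟨h2, h3⟩ := hb x hx
    rw [div_eq_mul_inv]
    exact (hasSum_geometric_of_lt_one h2 (by linarith)).mul_left _

lemma aux_arctan (t : ℝ) (h0 : 0 < t) (h1 : t^2 < 3) :
    arctan (1/t) - arctan ((t^2-1)/(2*t)) = π - 3*arctan t := by
  have h2 : arctan ((t^2-1)/(2*t)) = 2*arctan t - π/2 := by
    have ha : 0 < arctan t := by rwa [Real.arctan_pos]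
    have hb := Real.arctan_lt_pi_div_two t
    rw [← Real.arctan_tan (x := 2*arctan t - π/2) (by linarith) (by linarith)]
    congr 1
    rw [show 2*arctan t - π/2 = -(π/2 - 2*arctan t) by ring, Real.tan_neg, Real.tan_pi_div_two_sub,
      Real.tan_two_mul, Real.tan_arctan, inv_div, ← neg_div]
    ring
  rw [h2, one_div, Real.arctan_inv_of_pos h0]
  ring

lemma aux_I (t z : ℝ) (h0 : 0 < t) (h1 : t^2 < 3) (hz : z = (3-t^2)^3/(4*(1+t^2)^2)) :
    z * ∫ x in (0:ℝ)..1, (1-x)^2/(1-z*(x*(1-x)^2)) =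
      (3-t^2)/(9+t^2)*(6*(π/3 - arctan t)/t - log (4/(1+t^2))) := by
  obtain ⟨s, hs⟩ : ∃ s, s = 3 - t^2 := ⟨_, rfl⟩
  have ht2 : t^2 = 3 - s := by linarith
  have s0 : 0 < s := by linarith
  have s3 : s < 3 := by nlinarith
  have Ppos : ∀ x ∈ Set.uIcc (0:ℝ) 1, 0 < 4 - s*x := by
    intro x hx
    rw [Set.uIcc_of_le zero_le_one] at hx
    nlinarith [hx.1, hx.2]
  have Qpos : ∀ x : ℝ, 0 < (s*x-s+2)^2+4*t^2 := by intro x; positivity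
  have key : ∀ x ∈ Set.uIcc (0:ℝ) 1, z*((1-x)^2/(1-z*(x*(1-x)^2))) =
      s^3*(1-x)^2/((4-s*x)*((s*x-s+2)^2+4*t^2)) := by
    intro x hx
    have p := Ppos x hx
    have q := Qpos x
    have e1 : 1-z*(x*(1-x)^2) = (4-s*x)*((s*x-s+2)^2+4*t^2)/(4*(4-s)^2) := by
      rw [hz, ← hs, ht2]
      have : 4 - s ≠ 0 := by linarith
      have : 1 + (3 - s) ≠ 0 := by linarith
      field_simp
      ring
    have e2 : z = s^3/(4*(4-s)^2) := by
      rw [hz, ← hs, ht2]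
      ring
    rw [e1, e2]
    have : 4 - s ≠ 0 := by linarith
    field_simp
  have hd : ∀ x ∈ Set.uIcc (0:ℝ) 1, HasDerivAt
      (fun x => -((4-s)/(12-s))*log (4-s*x) - (4/(12-s))*log ((s*x-s+2)^2+4*t^2)
        + (2*s/(t*(12-s)))*arctan ((s*x-s+2)/(2*t)))
      (z*((1-x)^2/(1-z*(x*(1-x)^2)))) x := by
    intro x hx
    have p := Ppos x hx
    have q := Qpos x
    have l1 : HasDerivAt (fun x => 4 - s*x) (-s) x := by
      simpa using ((hasDerivAt_id' x).const_mul s).const_sub 4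
    have l2 : HasDerivAt (fun x => s*x-s+2) s x := by
      simpa using (((hasDerivAt_id' x).const_mul s).sub_const s).add_const 2
    have l3 := (l2.pow 2).add_const (4*t^2)
    have l4 := ((l2.div_const (2*t)).arctan).const_mul (2*s/(t*(12-s)))
    refine ((((l1.log p.ne').const_mul (-((4-s)/(12-s)))).sub
      ((l3.log q.ne').const_mul (4/(12-s)))).add l4).congr_deriv ?_
    rw [key x hx]
    have hh : 1 + ((s*x-s+2)/(2*t))^2 = ((s*x-s+2)^2+4*t^2)/(4*t^2) := by
      field_simp
      ring
    rw [hh]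
    have h12 : 12 - s ≠ 0 := by linarith
    have q' := q.ne'
    have p' := p.ne'
    simp only [Pi.pow_apply]
    have e3 : 2*s/(t*(12-s))*(1/(((s*x-s+2)^2+4*t^2)/(4*t^2))*(s/(2*t))) =
      4*s^2/((12-s)*((s*x-s+2)^2+4*t^2)) := by
      field_simp
    rw [e3]
    obtain ⟨Q, hQ⟩ : ∃ Q, Q = (s*x-s+2)^2+4*t^2 := ⟨_, rfl⟩
    rw [← hQ] at q' ⊢
    field_simp
    rw [hQ, ht2]
    push_cast
    ring
  have cont : ContinuousOn (fun x => z*((1-x)^2/(1-z*(x*(1-x)^2)))) (Set.uIcc (0:ℝ) 1) := by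
    refine ContinuousOn.congr (f := fun x => s^3*(1-x)^2/((4-s*x)*((s*x-s+2)^2+4*t^2))) ?_ key
    apply ContinuousOn.div (by fun_prop) (by fun_prop)
    intro x hx
    exact (mul_pos (Ppos x hx) (Qpos x)).ne'
  rw [← intervalIntegral.integral_const_mul,
    intervalIntegral.integral_eq_sub_of_hasDerivAt hd cont.intervalIntegrable]
  have hA := aux_arctan t h0 h1
  have a1 : (s*1-s+2)/(2*t) = 1/t := by field_simp; ring
  have a0 : (s*0-s+2)/(2*t) = (t^2-1)/(2*t) := by rw [hs]; ring
  have b1 : (s*1-s+2)^2+4*t^2 = 4*(4-s) := by rw [ht2]; ring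
  have b0 : (s*0-s+2)^2+4*t^2 = (4-s)^2 := by rw [ht2]; ring
  rw [a1, a0, b1, b0, show 1 + t^2 = 4 - s by linarith, ← hs, show 9 + t^2 = 12 - s by linarith,
    Real.log_mul (by norm_num) (by linarith), Real.log_pow,
    Real.log_div (by norm_num) (by linarith), mul_one, mul_zero, sub_zero]
  have h12 : 12 - s ≠ 0 := by linarith
  have hA' : arctan (1/t) = arctan ((t^2-1)/(2*t)) + (π - 3*arctan t) := by linarith
  rw [hA']
  field_simp
  push_cast
  ring

theorem stmt_12 :
    ∑' k : ℕ, (5832/1225 : ℝ)^(k+1) / (((k:ℝ)+1)^2 * (((3*(k+1)).choose (k+1) : ℕ) : ℝ)) =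
    6*(Real.arctan (Real.sqrt 3/2))^2 - (1/2)*(Real.log (25/7))^2 := by
  set F : ℝ → ℝ := fun z : ℝ => ∑' k : ℕ, z^(k+1) / (((k:ℝ)+1)^2 * (((3*(k+1)).choose (k+1) : ℕ) : ℝ)) with hF
  set Z : ℝ → ℝ := fun t => (3-t^2)^3/(4*(1+t^2)^2) with hZ
  set G : ℝ → ℝ := fun t => 6*(π/3 - arctan t)^2 - (1/2)*(log (4/(1+t^2)))^2 with hG
  have s3 : (√3)^2 = 3 := Real.sq_sqrt (by norm_num)
  have s3p : 0 < √3 := by positivity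
  have sq_lo : ∀ t ∈ Set.Icc (√3/5) (√3), 3/25 ≤ t^2 ∧ t^2 ≤ 3 ∧ 0 < t := by
    intro t ht
    have h1 := ht.1
    have h2 := ht.2
    have h3 : 0 < t := lt_of_lt_of_le (by positivity) h1
    refine ⟨by nlinarith, by nlinarith, h3⟩
  have Zb : ∀ t ∈ Set.Icc (√3/5) (√3), 0 ≤ Z t ∧ Z t < 49/10 := by
    intro t ht
    obtain ⟨h1, h2, h3⟩ := sq_lo t ht
    have h4 : 0 ≤ 3 - t^2 := by linarith
    refine ⟨by simp only [hZ]; positivity, ?_⟩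
    simp only [hZ]
    rw [div_lt_iff₀ (by positivity)]
    calc (3-t^2)^3 ≤ (72/25)^3 := by
          apply pow_le_pow_left₀ h4; linarith
      _ < 49/10*(4*(28/25)^2) := by norm_num
      _ ≤ _ := by
        have : (28/25:ℝ) ≤ 1+t^2 := by linarith
        gcongr
  have Zd : ∀ t : ℝ, HasDerivAt Z (-(2*t*(9+t^2)*(3-t^2)^2)/(4*(1+t^2)^3)) t := by
    intro t
    have d1 : HasDerivAt (fun t : ℝ => t^2) (2*t) t := by simpa using hasDerivAt_pow 2 t
    have d2 := (d1.const_sub 3).pow 3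
    have d3 := ((d1.const_add 1).pow 2).const_mul 4
    have hp : (0:ℝ) < 1 + t^2 := by positivity
    refine (d2.div d3 (by simp only [Pi.pow_apply]; positivity)).congr_deriv ?_
    simp only [Pi.pow_apply]
    field_simp
    push_cast
    ring
  have Gd : ∀ t : ℝ, HasDerivAt G ((-12*(π/3 - arctan t) + 2*t*log (4/(1+t^2)))/(1+t^2)) t := by
    intro t
    have hp : (0:ℝ) < 1 + t^2 := by positivity
    have d1 : HasDerivAt (fun t : ℝ => t^2) (2*t) t := by simpa using hasDerivAt_pow 2 t
    have d2 := ((((hasDerivAt_id' t).arctan).const_sub (π/3)).pow 2).const_mul 6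
    have d3 := ((((hasDerivAt_const t (4:ℝ)).div (d1.const_add 1) hp.ne').log
      (by simp only [Pi.div_apply]; positivity)).pow 2).const_mul (1/2)
    refine (d2.sub d3).congr_deriv ?_
    simp only [Pi.div_apply]
    field_simp
    push_cast
    ring
  have Fd : ∀ t ∈ Set.Icc (√3/5) (√3), HasDerivAt (fun t => F (Z t) - G t)
      ((∑' k : ℕ, (Z t)^k / (((k:ℝ)+1) * (((3*(k+1)).choose (k+1) : ℕ) : ℝ))) *
       (-(2*t*(9+t^2)*(3-t^2)^2)/(4*(1+t^2)^3))
        - (-12*(π/3 - arctan t) + 2*t*log (4/(1+t^2)))/(1+t^2)) t := by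
    intro t ht
    obtain ⟨h1, h2⟩ := Zb t ht
    exact ((aux_deriv (Z t) ⟨by linarith, h2⟩).comp t (Zd t)).sub (Gd t)
  have hc := constant_of_has_deriv_right_zero (f := fun t => F (Z t) - G t)
    (a := √3/5) (b := √3) (fun t ht => (Fd t ht).continuousAt.continuousWithinAt) (by
      intro t ht
      have ht' : t ∈ Set.Icc (√3/5) (√3) := ⟨ht.1, ht.2.le⟩
      obtain ⟨h1, h2, h3⟩ := sq_lo t ht'
      have h4 : t^2 < 3 := by nlinarith [ht.2]
      obtain ⟨z0, z1⟩ := Zb t ht'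
      have hI := aux_I t (Z t) h3 h4 rfl
      rw [← aux_H (Z t) z0 z1] at hI
      refine ((Fd t ht').congr_deriv ?_).hasDerivWithinAt
      set S := ∑' k : ℕ, (Z t)^k / (((k:ℝ)+1) * (((3*(k+1)).choose (k+1) : ℕ) : ℝ))
      have hp : (0:ℝ) < 1 + t^2 := by positivity
      have h5 : 3 - t^2 ≠ 0 := by linarith
      have e : S * (-(2*t*(9+t^2)*(3-t^2)^2)/(4*(1+t^2)^3)) =
          (Z t * S) * (-(2*t*(9+t^2))/((3-t^2)*(1+t^2))) := by
        simp only [hZ]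
        field_simp
      rw [e, hI]
      field_simp
      ring) (√3) ⟨by linarith, le_rfl⟩
  have hZ1 : Z (√3/5) = 5832/1225 := by
    simp only [hZ, div_pow, s3]
    norm_num
  have hZ0 : Z (√3) = 0 := by simp only [hZ, s3]; norm_num
  have hF0 : F 0 = 0 := by simp [hF]
  have at3 : arctan (√3) = π/3 := by
    rw [← Real.tan_pi_div_three, Real.arctan_tan] <;> linarith [Real.pi_pos]
  have hG0 : G (√3) = 0 := by
    simp only [hG, s3, at3]; norm_num
  have hat : arctan (√3/5) + arctan (√3/2) = π/3 := by
    rw [Real.arctan_add (by nlinarith), ← at3]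
    congr 1
    rw [div_eq_iff (by nlinarith)]
    nlinarith
  have hG1 : G (√3/5) = 6*(arctan (√3/2))^2 - (1/2)*(log (25/7))^2 := by
    simp only [hG, div_pow, s3, ← hat]
    norm_num
  simp only [hZ1, hZ0, hF0, hG0, hG1] at hc
  show F (5832/1225) = _
  linarith
end
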